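/- arXiv:1302.1782 — 2 statements merged into one kernel-verified Lean document; each statement's English description precedes it below -/
import Mathlib

section
/- Let 𝒞 be a small category, (−⊗I) elementary homotopy data on Psh(𝒞), and T a monad on Psh(𝒞) satisfying (M1)–(M3). Then there is a (Quillen) model structure on Psh(𝒞) in which the cofibrations are exactly the monomorphisms, the weak equivalences are exactly the T-weak equivalences, and the fibrations are the maps with the right lifting property with respect to all maps that are simultaneously monomorphisms and T-weak equivalences; in this model structure every T-algebra is a fibrant object, and for every presheaf X the unit η_X : X → TX is an acyclic cofibration into a fibrant object, exhibiting TX as a fibrant replacement of X. -/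
open CategoryTheory Category Limits

universe w v u

/-- The category of presheaves on a small category. -/
abbrev Psh (C : Type u) [SmallCategory C] := Cᵒᵖ ⥤ Type u

namespace PaperMSMonad

/-- `f` is a retract of `g` in the arrow category. -/
def IsRetractOf {D : Type*} [Category D] {X Y Z W : D} (f : X ⟶ Y) (g : Z ⟶ W) : Prop :=
  ∃ (i : X ⟶ Z) (r : Z ⟶ X) (i' : Y ⟶ W) (r' : W ⟶ Y),
    i ≫ r = 𝟙 X ∧ i' ≫ r' = 𝟙 Y ∧ i ≫ g = f ≫ i' ∧ g ≫ r' = r ≫ f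

/-- The cocone on the restriction of `F : J ⥤ D` to `Set.Iio j`, with point `F.obj j`. -/
@[simps]
def coconeLT {D : Type*} [Category D] {J : Type w} [Preorder J] (F : J ⥤ D) (j : J) :
    Cocone ((Monotone.functor (f := (Subtype.val : Set.Iio j → J))
      (fun _ _ h => h)) ⋙ F) where
  pt := F.obj j
  ι :=
    { app := fun i => F.map (homOfLE i.2.le)
      naturality := fun i i' g => by
        dsimp [Monotone.functor]
        rw [Category.comp_id, ← F.map_comp]
        rfl }

/-- A morphism property is stable under transfinite composition if, for every well-ordered
type `J`, every functor `F : J ⥤ D` which is continuous at limit stages and whose successor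
maps all lie in `W`, and every colimit cocone on `F`, the component of the cocone at the
bottom element lies in `W`. -/
def StableUnderTransfiniteComposition {D : Type*} [Category D]
    (W : MorphismProperty D) : Prop :=
  ∀ (J : Type w) (_ : LinearOrder J) (_ : SuccOrder J) (_ : OrderBot J) (_ : WellFoundedLT J)
    (F : J ⥤ D),
    (∀ (j : J), ¬IsMax j → W (F.map (homOfLE (Order.le_succ j)))) →
    (∀ (j : J), Order.IsSuccLimit j → Nonempty (IsColimit (coconeLT F j))) →
    ∀ (c : Cocone F), Nonempty (IsColimit c) → W (c.ι.app ⊥)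

/-- A class of morphisms is weakly saturated if it contains all isomorphisms and is closed
under pushout (cobase change), retracts and transfinite composition. -/
def IsWeaklySaturated {D : Type*} [Category D] (W : MorphismProperty D) : Prop :=
  (∀ ⦃X Y : D⦄ (f : X ⟶ Y), IsIso f → W f) ∧
  (∀ ⦃Z X Y P : D⦄ (t : Z ⟶ X) (f : Z ⟶ Y) (g : X ⟶ P) (b : Y ⟶ P),
      IsPushout t f g b → W f → W g) ∧
  (∀ ⦃X Y Z W' : D⦄ (f : X ⟶ Y) (g : Z ⟶ W'), IsRetractOf f g → W g → W f) ∧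
  StableUnderTransfiniteComposition.{w} W

/-- The saturated class generated by `S`: the smallest weakly saturated class containing `S`. -/
def SaturatedClassGen {D : Type*} [Category D] (S : MorphismProperty D) :
    MorphismProperty D :=
  fun _ _ f => ∀ W : MorphismProperty D, IsWeaklySaturated.{w} W → S ≤ W → W f

/-- The maps having the right lifting property with respect to all maps in `S`. -/
def RLP {D : Type*} [Category D] (S : MorphismProperty D) : MorphismProperty D :=
  fun _ _ g => ∀ ⦃A B : D⦄ (f : A ⟶ B), S f → HasLiftingProperty f g

/-- The maps having the left lifting property with respect to all maps in `S`. -/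
def LLP {D : Type*} [Category D] (S : MorphismProperty D) : MorphismProperty D :=
  fun _ _ f => ∀ ⦃A B : D⦄ (g : A ⟶ B), S g → HasLiftingProperty f g

end PaperMSMonad

namespace PaperMSMonad

variable {C : Type u} [SmallCategory C]

/-- Elementary homotopy data on the category of presheaves on `C`: a functorial cylinder
`X ↦ X ⊗ I` with endpoint inclusions `∂⁰`, `∂¹` and projection `σ`, such that
`[∂⁰,∂¹] : X + X → X ⊗ I` is always a monomorphism, the cylinder functor preserves small
colimits and monomorphisms, and the endpoint naturality squares at monomorphisms
are pullbacks. -/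
structure ElementaryHomotopyData (C : Type u) [SmallCategory C] where
  cyl : Psh C ⥤ Psh C
  d0 : 𝟭 (Psh C) ⟶ cyl
  d1 : 𝟭 (Psh C) ⟶ cyl
  σ : cyl ⟶ 𝟭 (Psh C)
  d0_σ : ∀ X : Psh C, d0.app X ≫ σ.app X = 𝟙 X
  d1_σ : ∀ X : Psh C, d1.app X ≫ σ.app X = 𝟙 X
  mono_pair : ∀ X : Psh C, Mono (coprod.desc (d0.app X) (d1.app X))
  preservesColimits : PreservesColimitsOfSize.{u, u} cyl
  preservesMono : ∀ ⦃K L : Psh C⦄ (j : K ⟶ L), Mono j → Mono (cyl.map j)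
  isPullback0 : ∀ ⦃K L : Psh C⦄ (j : K ⟶ L), Mono j →
    IsPullback j (d0.app K) (d0.app L) (cyl.map j)
  isPullback1 : ∀ ⦃K L : Psh C⦄ (j : K ⟶ L), Mono j →
    IsPullback j (d1.app K) (d1.app L) (cyl.map j)

namespace ElementaryHomotopyData

variable (E : ElementaryHomotopyData C)

/-- `f ≃ g`: there is a homotopy `θ : X ⊗ I ⟶ Y` from `f` to `g`. -/
def Htpy {X Y : Psh C} (f g : X ⟶ Y) : Prop :=
  ∃ θ : E.cyl.obj X ⟶ Y, E.d0.app X ≫ θ = f ∧ E.d1.app X ≫ θ = g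

/-- `f ≃* g`: the equivalence relation generated by the homotopy relation. -/
def HtpyStar {X Y : Psh C} (f g : X ⟶ Y) : Prop :=
  Relation.EqvGen (fun a b : X ⟶ Y => E.Htpy a b) f g

/-- `[X,Y]`: the quotient of `Hom(X,Y)` by the equivalence relation generated by homotopy. -/
def HQ (X Y : Psh C) :=
  Quot (fun a b : X ⟶ Y => E.Htpy a b)

/-- The class of `f : X ⟶ Y` in `[X,Y]`. -/
def HQ.mk {X Y : Psh C} (f : X ⟶ Y) : E.HQ X Y :=
  Quot.mk _ f

/-- `[f,A] : [Y,A] → [X,A]`, precomposition with `f` on homotopy classes. -/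
def precomp {X Y A : Psh C} (f : X ⟶ Y) : E.HQ Y A → E.HQ X A :=
  Quot.lift (fun h => HQ.mk E (f ≫ h)) (fun h h' hh => Quot.sound (by
    obtain ⟨θ, h0, h1⟩ := hh
    exact ⟨E.cyl.map f ≫ θ,
      by rw [← Category.assoc, ← E.d0.naturality, Functor.id_map, Category.assoc, h0],
      by rw [← Category.assoc, ← E.d1.naturality, Functor.id_map, Category.assoc, h1]⟩))

/-- For a monomorphism `j : K ⟶ L` the canonical map `K⊗I ∪ L⊗{0} ⟶ L⊗I`. -/
noncomputable def gluing0 {K L : Psh C} (j : K ⟶ L) :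
    pushout (E.d0.app K) j ⟶ E.cyl.obj L :=
  pushout.desc (E.cyl.map j) (E.d0.app L) (by rw [← E.d0.naturality j]; rfl)

/-- For a monomorphism `j : K ⟶ L` the canonical map `K⊗I ∪ L⊗{1} ⟶ L⊗I`. -/
noncomputable def gluing1 {K L : Psh C} (j : K ⟶ L) :
    pushout (E.d1.app K) j ⟶ E.cyl.obj L :=
  pushout.desc (E.cyl.map j) (E.d1.app L) (by rw [← E.d1.naturality j]; rfl)

/-- For a map `j : K ⟶ L` the canonical map `K⊗I ∪ L⊗∂I ⟶ L⊗I`. -/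
noncomputable def gluingBoth {K L : Psh C} (j : K ⟶ L) :
    pushout (coprod.desc (E.d0.app K) (E.d1.app K)) (coprod.map j j) ⟶ E.cyl.obj L :=
  pushout.desc (E.cyl.map j) (coprod.desc (E.d0.app L) (E.d1.app L)) (by
    apply coprod.hom_ext
    · rw [coprod.inl_desc_assoc, coprod.inl_map_assoc, coprod.inl_desc]
      exact (E.d0.naturality j).symm
    · rw [coprod.inr_desc_assoc, coprod.inr_map_assoc, coprod.inr_desc]
      exact (E.d1.naturality j).symm)

/-- The class `Λ⁰_I(S)`. -/
inductive Lambda0 (E : ElementaryHomotopyData C) (S : MorphismProperty (Psh C)) :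
    ∀ ⦃X Y : Psh C⦄, (X ⟶ Y) → Prop
  | ofS ⦃X Y : Psh C⦄ (f : X ⟶ Y) : S f → Lambda0 E S f
  | glue0 ⦃K L : Psh C⦄ (j : K ⟶ L) : Mono j → Lambda0 E S (E.gluing0 j)
  | glue1 ⦃K L : Psh C⦄ (j : K ⟶ L) : Mono j → Lambda0 E S (E.gluing1 j)

/-- The operation `𝚲(-)` applied to a class of maps. -/
inductive LambdaStep (E : ElementaryHomotopyData C) (P : MorphismProperty (Psh C)) :
    ∀ ⦃X Y : Psh C⦄, (X ⟶ Y) → Prop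
  | glue ⦃K L : Psh C⦄ (j : K ⟶ L) : P j → LambdaStep E P (E.gluingBoth j)

/-- The class `Λⁿ_I(S)`. -/
def LambdaN (S : MorphismProperty (Psh C)) : ℕ → MorphismProperty (Psh C)
  | 0 => Lambda0 E S
  | (n + 1) => LambdaStep E (LambdaN S n)

/-- The class `Λ_I(S) = ⋃ₙ Λⁿ_I(S)`. -/
def Lambda (S : MorphismProperty (Psh C)) : MorphismProperty (Psh C) :=
  fun _ _ f => ∃ n : ℕ, LambdaN E S n f

/-- The class `𝔄_I(S)` of anodyne extensions: maps with the left lifting property with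
respect to every map having the right lifting property with respect to `Λ_I(S)`. -/
def Anodyne (S : MorphismProperty (Psh C)) : MorphismProperty (Psh C) :=
  LLP (RLP (E.Lambda S))

/-- `A` is naively fibrant if `A ⟶ 1` has the right lifting property with respect to all
anodyne extensions. -/
def NaivelyFibrant (S : MorphismProperty (Psh C)) (A : Psh C) : Prop :=
  RLP (E.Anodyne S) (terminal.from A)

/-- A map `f : X ⟶ Y` is a `T`-weak equivalence if `[f,A] : [Y,A] → [X,A]` is a bijection
for every `T`-algebra `A`. -/
def TWeakEquiv (T : Monad (Psh C)) : MorphismProperty (Psh C) :=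
  fun _ _ f => ∀ A : T.Algebra, Function.Bijective (E.precomp (A := A.A) f)

end ElementaryHomotopyData

/-- The generating set of units `𝔊 = {η_{Gⁱ} : Gⁱ ⟶ T(Gⁱ)}`. -/
inductive unitsOf (T : Monad (Psh C)) {ι : Type u} (G : ι → Psh C) :
    ∀ ⦃X Y : Psh C⦄, (X ⟶ Y) → Prop
  | mk (i : ι) : unitsOf T G (T.η.app (G i))

end PaperMSMonad

namespace PaperMSMonad

open CategoryTheory Category Limits

/-- A pair of classes `(L, R)` forms a weak factorization system. -/
structure IsWFS {D : Type*} [Category D] (L R : MorphismProperty D) : Prop where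
  lift : ∀ ⦃A B X Y : D⦄ (f : A ⟶ B) (g : X ⟶ Y), L f → R g → HasLiftingProperty f g
  llp : ∀ ⦃A B : D⦄ (f : A ⟶ B),
    (∀ ⦃X Y : D⦄ (g : X ⟶ Y), R g → HasLiftingProperty f g) → L f
  rlp : ∀ ⦃X Y : D⦄ (g : X ⟶ Y),
    (∀ ⦃A B : D⦄ (f : A ⟶ B), L f → HasLiftingProperty f g) → R g
  fact : ∀ ⦃X Y : D⦄ (f : X ⟶ Y),
    ∃ (Z : D) (i : X ⟶ Z) (p : Z ⟶ Y), L i ∧ R p ∧ i ≫ p = f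

/-- `(W, Cof, Fib)` is a (Quillen) model structure: `W` satisfies two-out-of-three, and
`(Cof ∩ W, Fib)` and `(Cof, Fib ∩ W)` are weak factorization systems. -/
structure IsModelStructure {D : Type*} [Category D]
    (W Cof Fib : MorphismProperty D) : Prop where
  weq_comp : ∀ ⦃X Y Z : D⦄ (f : X ⟶ Y) (g : Y ⟶ Z), W f → W g → W (f ≫ g)
  weq_of_postcomp : ∀ ⦃X Y Z : D⦄ (f : X ⟶ Y) (g : Y ⟶ Z), W g → W (f ≫ g) → W f
  weq_of_precomp : ∀ ⦃X Y Z : D⦄ (f : X ⟶ Y) (g : Y ⟶ Z), W f → W (f ≫ g) → W g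
  wfs_trivCof_fib : IsWFS (Cof ⊓ W) Fib
  wfs_cof_trivFib : IsWFS Cof (Fib ⊓ W)

/-!
Every `T`-algebra is naively fibrant, and a naively fibrant `A` is a retract of the free algebra
`T A`, because the unit `A ⟶ T A` is anodyne. So the `T`-weak equivalences are the maps inducing
bijections on homotopy classes of maps into naively fibrant objects, as in the model structures of
Cisinski. A monomorphism is a weak equivalence of this kind exactly when it has the left lifting
property against naive fibrations between naively fibrant objects, whence the acyclic monomorphisms
are closed under all the operations of a left class.

It remains to generate them by a set. The presheaf of well-founded terms built from cells
is a functorial fibrant replacement `Rep` which preserves monomorphisms and intersections, and in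
which each term involves only few elements. A subpresheaf `K ≤ L` is acyclic if and only if there is
a deformation `L ⊗ I ⟶ Rep L` of `L` into `Rep K`, and then so is `K ⊓ N ≤ N` for all `N` which are
stable under the deformation. Small stable `N` contain any given element of `L`, so that lifts
against small acyclic monomorphisms extend, by Zorn's lemma, from `K` to all of `L`.
-/

/-! ### Lifting properties and subfunctors -/

section Lifting

variable {D : Type*} [Category D]

theorem hasLiftingProperty_iff_exists_lift {A B X Y : D} {i : A ⟶ B} {p : X ⟶ Y} :
    HasLiftingProperty i p ↔
      ∀ (a : A ⟶ X) (b : B ⟶ Y), a ≫ p = i ≫ b → ∃ l : B ⟶ X, i ≫ l = a ∧ l ≫ p = b := by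
  refine ⟨fun _ a b w => ?_, fun h => ⟨fun {a b} sq => ?_⟩⟩
  · have sq : CommSq a i p b := ⟨w⟩
    exact ⟨sq.lift, sq.fac_left, sq.fac_right⟩
  · obtain ⟨l, h₁, h₂⟩ := h a b sq.w
    exact ⟨⟨⟨l, h₁, h₂⟩⟩⟩

theorem hasLiftingProperty_terminal_iff [HasTerminal D] {A B X : D} {i : A ⟶ B} :
    HasLiftingProperty i (terminal.from X) ↔ ∀ a : A ⟶ X, ∃ l : B ⟶ X, i ≫ l = a := by
  rw [hasLiftingProperty_iff_exists_lift]
  refine ⟨fun h a => (h a (terminal.from B) (Subsingleton.elim _ _)).imp fun _ => And.left,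
    fun h a b _ => (h a).imp fun _ hl => ⟨hl, Subsingleton.elim _ _⟩⟩

theorem isWeaklySaturated_llp (S : MorphismProperty D) : IsWeaklySaturated.{w} S.llp := by
  refine ⟨fun X Y f _ => S.llp_of_isIso f, fun Z X Y P t f g b sq hf =>
    S.llp.of_isPushout sq hf, ?_, ?_⟩
  · rintro X Y Z W f g ⟨i, r, i', r', hi, hi', w, w'⟩ hg
    have retract : RetractArrow f g :=
      { i := Arrow.homMk i i' w, r := Arrow.homMk r r' w'.symm
        retract := by ext <;> assumption }
    exact S.llp.of_retract retract hg
  · intro J _ _ _ _ F hsucc hlim c ⟨hc⟩ A B p hp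
    have : F.IsWellOrderContinuous := ⟨fun m hm => hlim m hm⟩
    exact HasLiftingProperty.transfiniteComposition.hasLiftingProperty_ι_app_bot hc
      fun j hj => hsucc j hj p hp

theorem saturatedClassGen_le_llp_rlp (S : MorphismProperty D) :
    SaturatedClassGen.{w} S ≤ S.rlp.llp :=
  fun _ _ _ hf => hf _ (isWeaklySaturated_llp _) S.le_llp_rlp

end Lifting

section Subfunctors

variable {J : Type*} [Category J] {F X Y : J ⥤ Type w}

/-- A natural transformation between type-valued functors, from a family of functions. -/
def homMk (φ : ∀ c, F.obj c → X.obj c)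
    (hφ : ∀ ⦃c d⦄ (g : c ⟶ d) (x : F.obj c), φ d (F.map g x) = X.map g (φ c x)) : F ⟶ X where
  app c := ↾(φ c)
  naturality c d g := by
    ext x
    exact hφ g x

theorem mono_iff_injective_app (f : F ⟶ X) : Mono f ↔ ∀ c, Function.Injective (f.app c) := by
  simp only [NatTrans.mono_iff_mono_app, mono_iff_injective]

theorem hasLiftingProperty_range_ι_iff {i : F ⟶ X} [Mono i] {A B : J ⥤ Type w} {p : A ⟶ B} :
    HasLiftingProperty (Subfunctor.range i).ι p ↔ HasLiftingProperty i p := by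
  have e : Arrow.mk i ≅ Arrow.mk (Subfunctor.range i).ι :=
    Arrow.isoMk (asIso (Subfunctor.toRange i)) (Iso.refl _) (by simp)
  exact ⟨fun _ => HasLiftingProperty.of_arrow_iso_left e.symm p,
    fun _ => HasLiftingProperty.of_arrow_iso_left e p⟩

theorem isPushout_inf_sup (M N : Subfunctor F) :
    IsPushout (Subfunctor.homOfLe (inf_le_left : M ⊓ N ≤ M))
      (Subfunctor.homOfLe (inf_le_right : M ⊓ N ≤ N))
      (Subfunctor.homOfLe (le_sup_left : M ≤ M ⊔ N))
      (Subfunctor.homOfLe (le_sup_right : N ≤ M ⊔ N)) :=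
  .of_forall_isPushout_app fun c => Types.isPushout_of_bicartSq
    (show Lattice.BicartSq ((M ⊓ N).obj c) (M.obj c) (N.obj c) ((M ⊔ N).obj c) from ⟨rfl, rfl⟩)

theorem iSup_hom_ext {ι : Type*} {M : ι → Subfunctor F} {f g : (⨆ i, M i).toFunctor ⟶ X}
    (h : ∀ i, Subfunctor.homOfLe (le_iSup M i) ≫ f = Subfunctor.homOfLe (le_iSup M i) ≫ g) :
    f = g := by
  ext c ⟨x, hx⟩
  obtain ⟨i, hi⟩ := Set.mem_iUnion.1 (Subfunctor.iSup_obj M c ▸ hx)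
  exact ConcreteCategory.congr_hom (NatTrans.congr_app (h i) c) ⟨x, hi⟩

theorem exists_hom_iSup {ι : Type*} (M : ι → Subfunctor F) (l : ∀ i, (M i).toFunctor ⟶ X)
    (hl : ∀ i j, ∀ c (x : F.obj c) (hi : x ∈ (M i).obj c) (hj : x ∈ (M j).obj c),
      (l i).app c ⟨x, hi⟩ = (l j).app c ⟨x, hj⟩) :
    ∃ f : (⨆ i, M i).toFunctor ⟶ X, ∀ i, Subfunctor.homOfLe (le_iSup M i) ≫ f = l i := by
  have mem {c} (x : (⨆ i, M i).toFunctor.obj c) : ∃ i, x.1 ∈ (M i).obj c :=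
    Set.mem_iUnion.1 (Subfunctor.iSup_obj M c ▸ x.2)
  choose i hi using fun c x => mem (c := c) x
  refine ⟨homMk (fun c x => (l (i c x)).app c ⟨x.1, hi c x⟩) fun c d g x => ?_, fun j => ?_⟩
  · exact (hl _ _ _ _ _ ((M _).map g (hi c x))).trans
      (NatTrans.naturality_apply (l (i c x)) g ⟨x.1, hi c x⟩)
  · ext c x
    exact hl _ _ _ _ _ _

/-- A lift, defined over a subfunctor belonging to `𝒢`, of the map `v : F ⟶ Y` along
`p : X ⟶ Y`. -/
structure PartialLift (𝒢 : Set (Subfunctor F)) (p : X ⟶ Y) (v : F ⟶ Y) where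
  domain : Subfunctor F
  domain_mem : domain ∈ 𝒢
  lift : domain.toFunctor ⟶ X
  fac : lift ≫ p = domain.ι ≫ v

namespace PartialLift

variable {𝒢 : Set (Subfunctor F)} {p : X ⟶ Y} {v : F ⟶ Y}

instance : Preorder (PartialLift 𝒢 p v) where
  le a b := ∃ h : a.domain ≤ b.domain, Subfunctor.homOfLe h ≫ b.lift = a.lift
  le_refl a := ⟨le_rfl, rfl⟩
  le_trans _ _ _ h h' := ⟨h.1.trans h'.1, by rw [← h.2, ← h'.2]; rfl⟩

theorem lift_app_eq_of_le {a b : PartialLift 𝒢 p v} (h : a ≤ b) {c : J} {x : F.obj c}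
    (ha : x ∈ a.domain.obj c) (hb : x ∈ b.domain.obj c) :
    a.lift.app c ⟨x, ha⟩ = b.lift.app c ⟨x, hb⟩ := by
  rw [← h.2]
  rfl

theorem bddAbove_of_isChain (h𝒢 : ∀ S ⊆ 𝒢, S.Nonempty → sSup S ∈ 𝒢)
    {S : Set (PartialLift 𝒢 p v)} (hS : IsChain (· ≤ ·) S) (hne : S.Nonempty) :
    BddAbove S := by
  obtain ⟨f, hf⟩ := exists_hom_iSup (fun a : S => a.1.domain) (fun a => a.1.lift)
    fun a b c x ha hb => (hS.total a.2 b.2).elim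
      (fun h => lift_app_eq_of_le h ha hb) fun h => (lift_app_eq_of_le h hb ha).symm
  have mem : ⨆ a : S, a.1.domain ∈ 𝒢 := by
    have := hne.to_subtype
    exact h𝒢 _ (Set.range_subset_iff.2 fun a => a.1.domain_mem) (Set.range_nonempty _)
  refine ⟨⟨_, mem, f, iSup_hom_ext fun a => ?_⟩,
    fun a ha => ⟨le_iSup (fun a : S => a.1.domain) ⟨a, ha⟩, hf ⟨a, ha⟩⟩⟩
  rw [reassoc_of% (hf a), a.1.fac]
  rfl

theorem domain_eq_top_of_isMax
    (hext : ∀ M ∈ 𝒢, M ≠ ⊤ → ∃ N ∈ 𝒢, ∃ h : M < N, HasLiftingProperty (Subfunctor.homOfLe h.le) p)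
    {a : PartialLift 𝒢 p v} (ha : IsMax a) : a.domain = ⊤ := by
  by_contra hne
  obtain ⟨N, hN, hlt, hp⟩ := hext _ a.domain_mem hne
  obtain ⟨l, hl, hlp⟩ := hasLiftingProperty_iff_exists_lift.1 hp a.lift (N.ι ≫ v) a.fac
  exact hlt.not_ge (ha (b := ⟨N, hN, l, hlp⟩) ⟨hlt.le, hl⟩).1

end PartialLift

theorem hasLiftingProperty_ι_of_exists_extension {p : X ⟶ Y} {𝒢 : Set (Subfunctor F)}
    (hsup : ∀ S ⊆ 𝒢, S.Nonempty → sSup S ∈ 𝒢)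
    (hext : ∀ M ∈ 𝒢, M ≠ ⊤ → ∃ N ∈ 𝒢, ∃ h : M < N, HasLiftingProperty (Subfunctor.homOfLe h.le) p)
    {M : Subfunctor F} (hM : M ∈ 𝒢) : HasLiftingProperty M.ι p := by
  refine hasLiftingProperty_iff_exists_lift.2 fun u v w => ?_
  let a₀ : PartialLift 𝒢 p v := ⟨M, hM, u, w⟩
  obtain ⟨a, hle, hmax⟩ := zorn_le_nonempty_Ici₀ a₀
    (fun S _ hS b hb => PartialLift.bddAbove_of_isChain hsup hS ⟨b, hb⟩) a₀ le_rfl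
  have : IsIso a.domain.ι :=
    (Subfunctor.eq_top_iff_isIso _).1 (PartialLift.domain_eq_top_of_isMax hext hmax)
  refine ⟨inv a.domain.ι ≫ a.lift, ?_, ?_⟩
  · exact .trans (by rw [← Subfunctor.homOfLe_ι hle.1, assoc, IsIso.hom_inv_id_assoc]) hle.2
  · rw [assoc, a.fac, IsIso.inv_hom_id_assoc]

theorem hasLiftingProperty_homOfLe_sup {p : X ⟶ Y} {M N : Subfunctor F}
    [HasLiftingProperty (Subfunctor.homOfLe (inf_le_right : M ⊓ N ≤ N)) p] :
    HasLiftingProperty (Subfunctor.homOfLe (le_sup_left : M ≤ M ⊔ N)) p :=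
  (isPushout_inf_sup M N).hasLiftingProperty p

end Subfunctors

/-! ### Relative cell complexes as presheaves of terms -/

section Terms

variable {C : Type u} [SmallCategory C]

/-- A small family of subpresheaf inclusions `A j ≤ B j`, thought of as cells to be attached. -/
structure Cells (C : Type u) [SmallCategory C] where
  J : Type u
  B : J → Psh C
  A : ∀ j, Subfunctor (B j)

/-- The inclusions of a family of cells, as a class of morphisms. -/
def Cells.inclusions (S : Cells C) : MorphismProperty (Psh C) :=
  .ofHoms fun j => (S.A j).ι

theorem Cells.rlp_inclusions_iff {S : Cells C} {E Z : Psh C} {p : E ⟶ Z} :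
    S.inclusions.rlp p ↔ ∀ j, HasLiftingProperty (S.A j).ι p :=
  ⟨fun h j => h _ ⟨j⟩, fun h _ _ _ ⟨j⟩ => h j⟩

/-- Pre-terms over `X ⟶ Y`: an element of `X`, or an element `y ∉ A j` of the cell `B j`
attached along a family `u` of pre-terms and lying over `v : B j ⟶ Y`. -/
inductive PreTerm (S : Cells C) (Y X : Psh C) : Cᵒᵖ → Type u
  | inj {c : Cᵒᵖ} (x : X.obj c) : PreTerm S Y X c
  | fill {c : Cᵒᵖ} (j : S.J) (v : S.B j ⟶ Y) (u : ∀ d, (S.A j).obj d → PreTerm S Y X d)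
      (y : (S.B j).obj c) (hy : y ∉ (S.A j).obj c) : PreTerm S Y X c

namespace PreTerm

variable {S : Cells C} {X X' X'' Y : Psh C}
  {j : S.J} {v : S.B j ⟶ Y} {u : ∀ d, (S.A j).obj d → PreTerm S Y X d}

open Classical in
/-- The pre-term named by an arbitrary element of the cell attached along `u`. -/
noncomputable def cell (j : S.J) (v : S.B j ⟶ Y) (u : ∀ d, (S.A j).obj d → PreTerm S Y X d)
    (c : Cᵒᵖ) (y : (S.B j).obj c) : PreTerm S Y X c :=
  if hy : y ∈ (S.A j).obj c then u c ⟨y, hy⟩ else fill j v u y hy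

theorem cell_of_mem {c : Cᵒᵖ} {y : (S.B j).obj c} (hy : y ∈ (S.A j).obj c) :
    cell j v u c y = u c ⟨y, hy⟩ :=
  dif_pos hy

theorem cell_of_notMem {c : Cᵒᵖ} {y : (S.B j).obj c} (hy : y ∉ (S.A j).obj c) :
    cell j v u c y = fill j v u y hy :=
  dif_neg hy

/-- Restriction of pre-terms along a morphism of `Cᵒᵖ`. -/
noncomputable def res {c d : Cᵒᵖ} (g : c ⟶ d) : PreTerm S Y X c → PreTerm S Y X d
  | inj x => inj (X.map g x)
  | fill j v u y _ => cell j v u d ((S.B j).map g y)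

/-- The element of `Y` over which a pre-term lies. -/
def toBase (f : X ⟶ Y) {c : Cᵒᵖ} : PreTerm S Y X c → Y.obj c
  | inj x => f.app c x
  | fill _ v _ y _ => v.app c y

/-- The family `u` of pre-terms is natural and lies over the restriction of `v` to `A j`. -/
structure IsAttaching (f : X ⟶ Y) (j : S.J) (v : S.B j ⟶ Y)
    (u : ∀ d, (S.A j).obj d → PreTerm S Y X d) : Prop where
  res_eq {d e : Cᵒᵖ} (g : d ⟶ e) (a : (S.A j).obj d) :
    res g (u d a) = u e ⟨(S.B j).map g a.1, (S.A j).map g a.2⟩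
  toBase_eq {d : Cᵒᵖ} (a : (S.A j).obj d) : toBase f (u d a) = v.app d a.1

/-- A pre-term is well formed if all the families occurring in it are attaching. -/
def IsTerm (f : X ⟶ Y) : ∀ {c : Cᵒᵖ}, PreTerm S Y X c → Prop
  | _, inj _ => True
  | _, fill j v u _ _ => (∀ d a, IsTerm f (u d a)) ∧ IsAttaching f j v u

variable {f : X ⟶ Y}

theorem IsAttaching.res_cell (h : IsAttaching f j v u) {c d : Cᵒᵖ} (g : c ⟶ d)
    (y : (S.B j).obj c) : res g (cell j v u c y) = cell j v u d ((S.B j).map g y) := by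
  by_cases hy : y ∈ (S.A j).obj c
  · rw [cell_of_mem hy, cell_of_mem ((S.A j).map g hy), h.res_eq]
  · rw [cell_of_notMem hy, res]

theorem IsAttaching.toBase_cell (h : IsAttaching f j v u) {c : Cᵒᵖ} (y : (S.B j).obj c) :
    toBase f (cell j v u c y) = v.app c y := by
  by_cases hy : y ∈ (S.A j).obj c
  · rw [cell_of_mem hy, h.toBase_eq]
  · rw [cell_of_notMem hy, toBase]

theorem IsAttaching.isTerm_cell (h : IsAttaching f j v u) (hu : ∀ d a, IsTerm f (u d a))
    {c : Cᵒᵖ} (y : (S.B j).obj c) : IsTerm f (cell j v u c y) := by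
  by_cases hy : y ∈ (S.A j).obj c
  · rw [cell_of_mem hy]
    exact hu _ _
  · rw [cell_of_notMem hy]
    exact ⟨hu, h⟩

theorem IsTerm.res {c d : Cᵒᵖ} (g : c ⟶ d) {t : PreTerm S Y X c} (ht : IsTerm f t) :
    IsTerm f (res g t) := by
  cases t with
  | inj x => trivial
  | fill j v u y hy => exact ht.2.isTerm_cell ht.1 _

theorem res_id {c : Cᵒᵖ} (t : PreTerm S Y X c) : res (𝟙 c) t = t := by
  cases t with
  | inj x => rw [res, X.map_id_apply]
  | fill j v u y hy => rw [res, (S.B j).map_id_apply, cell_of_notMem hy]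

theorem IsTerm.res_comp {c d e : Cᵒᵖ} (g : c ⟶ d) (k : d ⟶ e) {t : PreTerm S Y X c}
    (ht : IsTerm f t) : PreTerm.res (g ≫ k) t = PreTerm.res k (PreTerm.res g t) := by
  cases t with
  | inj x => rw [PreTerm.res, X.map_comp_apply]; rfl
  | fill j v u y hy =>
    rw [PreTerm.res, PreTerm.res, ht.2.res_cell, (S.B j).map_comp_apply]

theorem IsTerm.toBase_res {c d : Cᵒᵖ} (g : c ⟶ d) {t : PreTerm S Y X c} (ht : IsTerm f t) :
    toBase f (PreTerm.res g t) = Y.map g (toBase f t) := by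
  cases t with
  | inj x => exact NatTrans.naturality_apply f g x
  | fill j v u y hy => exact (ht.2.toBase_cell _).trans (NatTrans.naturality_apply v g y)

/-- Functoriality of pre-terms. -/
def map (m : X ⟶ X') : ∀ {c : Cᵒᵖ}, PreTerm S Y X c → PreTerm S Y X' c
  | c, inj x => inj (m.app c x)
  | _, fill j v u y hy => fill j v (fun d a => map m (u d a)) y hy

theorem map_cell (m : X ⟶ X') {c : Cᵒᵖ} (y : (S.B j).obj c) :
    map m (cell j v u c y) = cell j v (fun d a => map m (u d a)) c y := by
  by_cases hy : y ∈ (S.A j).obj c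
  · rw [cell_of_mem hy, cell_of_mem hy]
  · rw [cell_of_notMem hy, cell_of_notMem hy, map]

theorem map_res (m : X ⟶ X') {c d : Cᵒᵖ} (g : c ⟶ d) (t : PreTerm S Y X c) :
    map m (res g t) = res g (map m t) := by
  cases t with
  | inj x => exact congr_arg inj (NatTrans.naturality_apply m g x)
  | fill j v u y hy => rw [res, map_cell, map, res]

theorem toBase_map (m : X ⟶ X') (f' : X' ⟶ Y) {c : Cᵒᵖ} (t : PreTerm S Y X c) :
    toBase f' (map m t) = toBase (m ≫ f') t := by
  cases t <;> rfl

theorem map_id {c : Cᵒᵖ} (t : PreTerm S Y X c) : map (𝟙 X) t = t := by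
  induction t with
  | inj x => rfl
  | fill j v u y hy ih => simp only [map, ih]

theorem map_comp (m : X ⟶ X') (m' : X' ⟶ X'') {c : Cᵒᵖ} (t : PreTerm S Y X c) :
    map (m ≫ m') t = map m' (map m t) := by
  induction t with
  | inj x => rfl
  | fill j v u y hy ih => simp only [map, ih]

theorem map_injective (m : X ⟶ X') [Mono m] {c : Cᵒᵖ} :
    Function.Injective (map m : PreTerm S Y X c → PreTerm S Y X' c) := by
  intro t t' h
  induction t with
  | inj x =>
    cases t' with
    | inj x' =>
      exact congr_arg inj ((mono_iff_injective_app m).1 inferInstance _ (inj.inj h))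
    | fill => simp only [map, reduceCtorEq] at h
  | fill j v u y hy ih =>
    cases t' with
    | inj => simp only [map, reduceCtorEq] at h
    | fill =>
      simp only [map, fill.injEq] at h
      obtain ⟨rfl, ⟨⟩, hu, ⟨⟩⟩ := h
      congr 1
      funext d a
      exact ih d a (congr_fun₂ (eq_of_heq hu) d a)

theorem IsTerm.map (m : X ⟶ X') {f' : X' ⟶ Y} {c : Cᵒᵖ} {t : PreTerm S Y X c}
    (ht : IsTerm (m ≫ f') t) : IsTerm f' (map m t) := by
  induction t with
  | inj x => trivial
  | fill j v u y hy ih =>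
    refine ⟨fun d a => ih d a (ht.1 d a), fun g a => ?_, fun a => ?_⟩
    · rw [← map_res, ht.2.res_eq]
    · rw [toBase_map, ht.2.toBase_eq]

theorem IsTerm.of_map (m : X ⟶ X') [Mono m] {f' : X' ⟶ Y} {c : Cᵒᵖ} {t : PreTerm S Y X c}
    (ht : IsTerm f' (PreTerm.map m t)) : IsTerm (m ≫ f') t := by
  induction t with
  | inj x => trivial
  | fill j v u y hy ih =>
    refine ⟨fun d a => ih d a (ht.1 d a), fun g a => map_injective m ?_, fun a => ?_⟩
    · rw [map_res]
      exact ht.2.res_eq g a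
    · rw [← toBase_map]
      exact ht.2.toBase_eq a

/-- The smallest subpresheaf of `X` containing all the elements occurring in a pre-term. -/
def supp : ∀ {c : Cᵒᵖ}, PreTerm S Y X c → Subfunctor X
  | _, inj x => .ofSection x
  | _, fill j _ u _ _ => ⨆ a : (S.A j).toFunctor.Elements, supp (u a.1 a.2)

theorem exists_map_ι_eq_iff (N : Subfunctor X) {c : Cᵒᵖ} {t : PreTerm S Y X c} :
    (∃ t' : PreTerm S Y N.toFunctor c, map N.ι t' = t) ↔ supp t ≤ N := by
  constructor
  · rintro ⟨t', rfl⟩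
    induction t' with
    | inj x => exact (Subfunctor.ofSection_le_iff _ _).2 x.2
    | fill _ _ _ _ _ ih => exact iSup_le fun a => ih a.1 a.2
  · intro h
    induction t with
    | inj x => exact ⟨inj ⟨x, (Subfunctor.ofSection_le_iff _ _).1 h⟩, rfl⟩
    | fill j v u y hy ih =>
      choose u' hu' using fun d a => ih d a ((le_iSup (fun a : (S.A j).toFunctor.Elements =>
        supp (u a.1 a.2)) ⟨d, a⟩).trans h)
      exact ⟨fill j v u' y hy, by simp only [map, hu']⟩

end PreTerm

end Terms

section Factorization

variable {C : Type u} [SmallCategory C]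

/-- The presheaf of well-formed terms over `f : X ⟶ Y`, which is the middle object of a
factorization of `f` into a relative cell complex followed by a map with the right lifting
property with respect to the cells. -/
noncomputable def Fac (S : Cells C) {X Y : Psh C} (f : X ⟶ Y) : Psh C where
  obj c := { t : PreTerm S Y X c // t.IsTerm f }
  map g := ↾fun t => ⟨t.1.res g, t.2.res g⟩
  map_id c := by
    ext t
    exact t.1.res_id
  map_comp g k := by
    ext t
    exact t.2.res_comp g k

namespace Fac

variable (S : Cells C) {X Y : Psh C} (f : X ⟶ Y)

/-- The first map of the factorization. -/
noncomputable def incl : X ⟶ Fac S f :=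
  homMk (fun _ x => ⟨.inj x, trivial⟩) fun _ _ _ _ => rfl

/-- The second map of the factorization. -/
noncomputable def proj : Fac S f ⟶ Y :=
  homMk (fun _ t => t.1.toBase f) fun _ _ g t => t.2.toBase_res g

theorem incl_proj : incl S f ≫ proj S f = f := rfl

instance : Mono (incl S f) :=
  (mono_iff_injective_app _).2 fun _ _ _ h => PreTerm.inj.inj (congr_arg Subtype.val h)

variable {S f} {j : S.J}

theorem isAttaching {a : (S.A j).toFunctor ⟶ Fac S f} {v : S.B j ⟶ Y}
    (w : a ≫ proj S f = (S.A j).ι ≫ v) :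
    PreTerm.IsAttaching f j v fun d x => (a.app d x).1 where
  res_eq g x := by
    have h := NatTrans.naturality_apply a g x
    exact (congr_arg Subtype.val h).symm
  toBase_eq {d} x := ConcreteCategory.congr_hom (NatTrans.congr_app w d) x

/-- The cell attached to `Fac S f` along `a` over `v`. -/
noncomputable def cellMap (a : (S.A j).toFunctor ⟶ Fac S f) (v : S.B j ⟶ Y)
    (w : a ≫ proj S f = (S.A j).ι ≫ v) : S.B j ⟶ Fac S f :=
  homMk (fun c y => ⟨.cell j v _ c y, (isAttaching w).isTerm_cell (fun d x => (a.app d x).2) y⟩)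
    fun _ _ g y => Subtype.ext ((isAttaching w).res_cell g y).symm

theorem ι_cellMap (a : (S.A j).toFunctor ⟶ Fac S f) (v : S.B j ⟶ Y)
    (w : a ≫ proj S f = (S.A j).ι ≫ v) : (S.A j).ι ≫ cellMap a v w = a := by
  ext c x
  exact Subtype.ext (PreTerm.cell_of_mem x.2)

theorem cellMap_proj (a : (S.A j).toFunctor ⟶ Fac S f) (v : S.B j ⟶ Y)
    (w : a ≫ proj S f = (S.A j).ι ≫ v) : cellMap a v w ≫ proj S f = v := by
  ext c y
  exact (isAttaching w).toBase_cell y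

theorem rlp_proj : S.inclusions.rlp (proj S f) :=
  Cells.rlp_inclusions_iff.2 fun _ => hasLiftingProperty_iff_exists_lift.2 fun a v w =>
    ⟨cellMap a v w, ι_cellMap a v w, cellMap_proj a v w⟩

theorem induction {P : ∀ c, (Fac S f).obj c → Prop}
    (inj : ∀ c x, P c ((incl S f).app c x))
    (cell : ∀ (j : S.J) (a : (S.A j).toFunctor ⟶ Fac S f) (v : S.B j ⟶ Y)
      (w : a ≫ proj S f = (S.A j).ι ≫ v), (∀ c x, P c (a.app c x)) →
      ∀ c (y : (S.B j).obj c), y ∉ (S.A j).obj c → P c ((cellMap a v w).app c y)) :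
    ∀ c t, P c t := by
  rintro c ⟨t, ht⟩
  induction t with
  | inj x => exact inj _ x
  | @fill c j v u y hy ih =>
    let a : (S.A j).toFunctor ⟶ Fac S f :=
      homMk (fun d x => ⟨u d x, ht.1 d x⟩) fun _ _ g x => Subtype.ext (ht.2.res_eq g x).symm
    have w : a ≫ proj S f = (S.A j).ι ≫ v := by
      ext d x
      exact ht.2.toBase_eq x
    have := cell j a v w (fun d x => ih d x _) c y hy
    rwa [show (cellMap a v w).app c y = ⟨.fill j v u y hy, ht⟩ from
      Subtype.ext (PreTerm.cell_of_notMem hy)] at this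

section Lift

variable {E Z : Psh C} (a : X ⟶ E) (b : Fac S f ⟶ Z) (p : E ⟶ Z)

/-- The relation `t ↦ e` defining the lift of `b` along `p` which extends `a`, where a lift
is chosen once for every cell. -/
def LiftsTo : ∀ {c : Cᵒᵖ}, PreTerm S Y X c → E.obj c → Prop
  | c, .inj x, e => e = a.app c x
  | c, .fill j v u y _, e => ∃ h : ∃ l : S.B j ⟶ E,
      (∀ d x, LiftsTo (u d x) (l.app d x.1)) ∧
      ∀ d (z : (S.B j).obj d) (hz : (PreTerm.cell j v u d z).IsTerm f),
        p.app d (l.app d z) = b.app d ⟨_, hz⟩,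
      e = h.choose.app c y

variable {a b p}

theorem LiftsTo.unique {c : Cᵒᵖ} {t : PreTerm S Y X c} {e e' : E.obj c}
    (h : LiftsTo a b p t e) (h' : LiftsTo a b p t e') : e = e' := by
  cases t with
  | inj x => exact h.trans h'.symm
  | fill j v u y hy => exact h.2.trans h'.2.symm

theorem liftsTo_cell {u : ∀ d, (S.A j).obj d → PreTerm S Y X d} {v : S.B j ⟶ Y}
    (h : ∃ l : S.B j ⟶ E, (∀ d x, LiftsTo a b p (u d x) (l.app d x.1)) ∧
      ∀ d (z : (S.B j).obj d) (hz : (PreTerm.cell j v u d z).IsTerm f),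
        p.app d (l.app d z) = b.app d ⟨_, hz⟩) {c : Cᵒᵖ} (y : (S.B j).obj c) :
    LiftsTo a b p (PreTerm.cell j v u c y) (h.choose.app c y) := by
  by_cases hy : y ∈ (S.A j).obj c
  · rw [PreTerm.cell_of_mem hy]
    exact h.choose_spec.1 c ⟨y, hy⟩
  · rw [PreTerm.cell_of_notMem hy]
    exact ⟨h, rfl⟩

theorem exists_liftsTo (hp : S.inclusions.rlp p) (w : a ≫ p = incl S f ≫ b) (c : Cᵒᵖ)
    (t : (Fac S f).obj c) : ∃ e : E.obj c, p.app c e = b.app c t ∧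
      ∀ d (g : c ⟶ d), LiftsTo a b p (t.1.res g) (E.map g e) := by
  induction c, t using Fac.induction with
  | inj c x =>
    refine ⟨a.app c x, ConcreteCategory.congr_hom (NatTrans.congr_app w c) x, fun d g => ?_⟩
    have h := NatTrans.naturality_apply a g x
    exact h.symm
  | cell j α v hα ih c y _ =>
    choose ℓ hℓb hℓ using ih
    have hℓ_id (d : Cᵒᵖ) (x : (S.A j).obj d) : LiftsTo a b p (α.app d x).1 (ℓ d x) := by
      simpa only [PreTerm.res_id, E.map_id_apply] using hℓ d x d (𝟙 d)
    let k : (S.A j).toFunctor ⟶ E := homMk ℓ fun d d' g x => (hℓ_id _ _).unique (by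
      rw [NatTrans.naturality_apply]
      exact hℓ d x d' g)
    obtain ⟨l, hkl, hlp⟩ := hasLiftingProperty_iff_exists_lift.1
      (Cells.rlp_inclusions_iff.1 hp j) k (cellMap α v hα ≫ b) (by
        rw [← assoc, ι_cellMap]
        ext d x
        exact hℓb d x)
    have h : ∃ l : S.B j ⟶ E, (∀ d x, LiftsTo a b p (α.app d x).1 (l.app d x.1)) ∧
        ∀ d z (hz : (PreTerm.cell j v (fun d x => (α.app d x).1) d z).IsTerm f),
          p.app d (l.app d z) = b.app d ⟨_, hz⟩ := by
      refine ⟨l, fun d x => ?_,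
        fun d z _ => ConcreteCategory.congr_hom (NatTrans.congr_app hlp d) z⟩
      have : l.app d x.1 = ℓ d x := ConcreteCategory.congr_hom (NatTrans.congr_app hkl d) x
      exact this ▸ hℓ_id d x
    refine ⟨h.choose.app c y, h.choose_spec.2 c y _, fun d g => ?_⟩
    rw [← NatTrans.naturality_apply]
    have hg : ((cellMap α v hα).app c y).1.res g = .cell j v _ d ((S.B j).map g y) :=
      (isAttaching hα).res_cell g y
    rw [hg]
    exact liftsTo_cell h _

end Lift

theorem llp_incl : S.inclusions.rlp.llp (incl S f) := by
  refine fun E Z p hp => hasLiftingProperty_iff_exists_lift.2 fun a b w => ?_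
  choose ℓ hℓb hℓ using exists_liftsTo hp w
  have hℓ_id (c : Cᵒᵖ) (t : (Fac S f).obj c) : LiftsTo a b p t.1 (ℓ c t) := by
    simpa only [PreTerm.res_id, E.map_id_apply] using hℓ c t c (𝟙 c)
  refine ⟨homMk ℓ fun c d g t => (hℓ_id d _).unique (hℓ c t d g), ?_, ?_⟩
  · ext c x
    exact hℓ_id c ((incl S f).app c x)
  · ext c t
    exact hℓb c t

end Fac

theorem Cells.hasFactorization (S : Cells C) :
    MorphismProperty.HasFactorization S.inclusions.rlp.llp S.inclusions.rlp where
  nonempty_mapFactorizationData f :=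
    ⟨{ Z := Fac S f, i := Fac.incl S f, p := Fac.proj S f, fac := Fac.incl_proj S f,
       hi := Fac.llp_incl, hp := Fac.rlp_proj }⟩

/-- The functorial replacement of a presheaf by one with extensions along the cells. -/
noncomputable def Rep (S : Cells C) : Psh C ⥤ Psh C where
  obj X := Fac S (terminal.from X)
  map m := homMk (fun _ t => ⟨t.1.map m, .map m (by rw [terminal.comp_from]; exact t.2)⟩)
    fun _ _ g t => Subtype.ext (PreTerm.map_res m g t.1)
  map_id X := by
    ext c t
    exact Subtype.ext t.1.map_id
  map_comp m m' := by
    ext c t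
    exact Subtype.ext (t.1.map_comp m m')

namespace Rep

variable (S : Cells C)

/-- The canonical map from a presheaf to its replacement. -/
noncomputable def η : 𝟭 (Psh C) ⟶ Rep S where
  app X := Fac.incl S (terminal.from X)

variable {S}

instance (X : Psh C) : Mono ((η S).app X) :=
  inferInstanceAs (Mono (Fac.incl S _))

instance : (Rep S).PreservesMonomorphisms where
  preserves m _ := (mono_iff_injective_app _).2 fun _ _ _ h =>
    Subtype.ext (PreTerm.map_injective m (congr_arg Subtype.val h))

theorem llp_η (X : Psh C) : S.inclusions.rlp.llp ((η S).app X) :=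
  Fac.llp_incl

theorem rlp_terminal_from (X : Psh C) : S.inclusions.rlp (terminal.from ((Rep S).obj X)) := by
  have h : Fac.proj S (terminal.from X) = terminal.from ((Rep S).obj X) := Subsingleton.elim _ _
  exact h ▸ Fac.rlp_proj

theorem mem_range_map_ι_iff {X : Psh C} (N : Subfunctor X) {c : Cᵒᵖ}
    (t : ((Rep S).obj X).obj c) :
    t ∈ (Subfunctor.range ((Rep S).map N.ι)).obj c ↔ t.1.supp ≤ N := by
  rw [← PreTerm.exists_map_ι_eq_iff]
  refine ⟨fun ⟨t', ht'⟩ => ⟨t'.1, congr_arg Subtype.val ht'⟩, fun ⟨t', ht'⟩ => ?_⟩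
  have h : t'.IsTerm (N.ι ≫ terminal.from X) := .of_map _ (ht' ▸ t.2)
  exact ⟨⟨t', terminal.comp_from N.ι ▸ h⟩, Subtype.ext ht'⟩

end Rep

end Factorization

/-! ### Leibniz constructions -/

section Leibniz

variable {D : Type*} [Category D] {F G F' G' : D ⥤ D} {K L X Y : D}

theorem homEquiv_app_comp (adjF : F ⊣ F') (adjG : G ⊣ G') (τ : F ⟶ G) (x : G.obj K ⟶ X) :
    adjF.homEquiv K X (τ.app K ≫ x) =
      adjG.homEquiv K X x ≫ (conjugateEquiv adjG adjF τ).app X := by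
  rw [adjF.homEquiv_unit, adjG.homEquiv_unit, Functor.map_comp,
    ← reassoc_of% unit_conjugateEquiv adjG adjF τ K, assoc, NatTrans.naturality]

section

variable [HasPullbacks D]

/-- The pullback-hom `G' X ⟶ F' X ×_{F' Y} G' Y` of `σ : G' ⟶ F'` and `p : X ⟶ Y`. -/
noncomputable def pullbackHom (σ : G' ⟶ F') (p : X ⟶ Y) :
    G'.obj X ⟶ pullback (F'.map p) (σ.app Y) :=
  pullback.lift (σ.app X) (G'.map p) (σ.naturality p).symm

theorem hasLiftingProperty_pullbackHom_iff {σ : G' ⟶ F'} {j : K ⟶ L} {p : X ⟶ Y} :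
    HasLiftingProperty j (pullbackHom σ p) ↔
      ∀ (a : K ⟶ G'.obj X) (b : L ⟶ F'.obj X) (c : L ⟶ G'.obj Y), a ≫ σ.app X = j ≫ b →
        a ≫ G'.map p = j ≫ c → b ≫ F'.map p = c ≫ σ.app Y →
        ∃ l : L ⟶ G'.obj X, j ≫ l = a ∧ l ≫ σ.app X = b ∧ l ≫ G'.map p = c := by
  rw [hasLiftingProperty_iff_exists_lift]
  constructor
  · intro h a b c hab hac hbc
    obtain ⟨l, hl, hlp⟩ := h a (pullback.lift b c hbc) (by
      ext <;> simpa only [pullbackHom, assoc, pullback.lift_fst, pullback.lift_snd])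
    have hb := hlp =≫ pullback.fst _ _
    have hc := hlp =≫ pullback.snd _ _
    simp only [pullbackHom, assoc, pullback.lift_fst] at hb
    simp only [pullbackHom, assoc, pullback.lift_snd] at hc
    exact ⟨l, hl, hb, hc⟩
  · intro h a v w
    obtain ⟨l, hl, hb, hc⟩ := h a (v ≫ pullback.fst _ _) (v ≫ pullback.snd _ _)
      (by rw [← reassoc_of% w, pullbackHom, pullback.lift_fst])
      (by rw [← reassoc_of% w, pullbackHom, pullback.lift_snd])
      (by rw [assoc, assoc, pullback.condition])
    refine ⟨l, hl, ?_⟩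
    ext <;> simpa only [pullbackHom, assoc, pullback.lift_fst, pullback.lift_snd]

end

variable [HasPushouts D]

/-- The Leibniz map `G K ∪ F L ⟶ G L` of a natural transformation `τ : F ⟶ G` and a morphism
`j : K ⟶ L`. The gluing maps of a cylinder are instances of this construction. -/
noncomputable def leibniz (τ : F ⟶ G) (j : K ⟶ L) :
    pushout (τ.app K) (F.map j) ⟶ G.obj L :=
  pushout.desc (G.map j) (τ.app L) (τ.naturality j).symm

theorem hasLiftingProperty_leibniz_iff {τ : F ⟶ G} {j : K ⟶ L} {p : X ⟶ Y} :
    HasLiftingProperty (leibniz τ j) p ↔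
      ∀ (a : G.obj K ⟶ X) (b : F.obj L ⟶ X) (c : G.obj L ⟶ Y), τ.app K ≫ a = F.map j ≫ b →
        a ≫ p = G.map j ≫ c → b ≫ p = τ.app L ≫ c →
        ∃ l : G.obj L ⟶ X, G.map j ≫ l = a ∧ τ.app L ≫ l = b ∧ l ≫ p = c := by
  rw [hasLiftingProperty_iff_exists_lift]
  constructor
  · intro h a b c hab hac hbc
    obtain ⟨l, hl, hlp⟩ := h (pushout.desc a b hab) c (by
      ext <;> simpa only [leibniz, pushout.inl_desc_assoc, pushout.inr_desc_assoc])
    have ha := pushout.inl _ _ ≫= hl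
    have hb := pushout.inr _ _ ≫= hl
    simp only [leibniz, pushout.inl_desc, pushout.inl_desc_assoc] at ha
    simp only [leibniz, pushout.inr_desc, pushout.inr_desc_assoc] at hb
    exact ⟨l, ha, hb, hlp⟩
  · intro h u c w
    obtain ⟨l, ha, hb, hlp⟩ := h (pushout.inl _ _ ≫ u) (pushout.inr _ _ ≫ u) c
      (pushout.condition_assoc u) (by rw [assoc, w, leibniz, pushout.inl_desc_assoc])
      (by rw [assoc, w, leibniz, pushout.inr_desc_assoc])
    refine ⟨l, ?_, hlp⟩
    ext <;> simpa only [leibniz, pushout.inl_desc_assoc, pushout.inr_desc_assoc]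

theorem hasLiftingProperty_leibniz_iff_pullbackHom [HasPullbacks D] (adjF : F ⊣ F') (adjG : G ⊣ G')
    {τ : F ⟶ G} {j : K ⟶ L} {p : X ⟶ Y} :
    HasLiftingProperty (leibniz τ j) p ↔
      HasLiftingProperty j (pullbackHom (conjugateEquiv adjG adjF τ) p) := by
  rw [hasLiftingProperty_leibniz_iff, hasLiftingProperty_pullbackHom_iff]
  refine (adjG.homEquiv K X).forall_congr fun a => (adjF.homEquiv L X).forall_congr fun b =>
    (adjG.homEquiv L Y).forall_congr fun c => imp_congr ?_ <| imp_congr ?_ <| imp_congr ?_ <|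
      (adjG.homEquiv L X).exists_congr fun l => and_congr ?_ <| and_congr ?_ ?_
  · rw [← homEquiv_app_comp adjF adjG, ← adjF.homEquiv_naturality_left,
      EmbeddingLike.apply_eq_iff_eq]
  · rw [← adjG.homEquiv_naturality_left, ← adjG.homEquiv_naturality_right,
      EmbeddingLike.apply_eq_iff_eq]
  · rw [← homEquiv_app_comp adjF adjG, ← adjF.homEquiv_naturality_right,
      EmbeddingLike.apply_eq_iff_eq]
  · rw [← adjG.homEquiv_naturality_left, EmbeddingLike.apply_eq_iff_eq]
  · rw [← homEquiv_app_comp adjF adjG, EmbeddingLike.apply_eq_iff_eq]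
  · rw [← adjG.homEquiv_naturality_right, EmbeddingLike.apply_eq_iff_eq]

end Leibniz

section LeibnizPresheaf

variable {C : Type u} [SmallCategory C]

theorem mono_leibniz {F G : Psh C ⥤ Psh C} {τ : F ⟶ G} {K L : Psh C} {j : K ⟶ L}
    (h : IsPullback (F.map j) (τ.app K) (τ.app L) (G.map j)) [Mono (τ.app L)] [Mono (G.map j)] :
    Mono (leibniz τ j) := by
  refine (NatTrans.mono_iff_mono_app _).2 fun c => ?_
  refine Types.mono_of_isPushout_of_isPullback ((IsPushout.of_hasPushout _ _).app c)
    (h.flip.app c) ?_ ?_ fun x y _ _ e => (mono_iff_injective_app (τ.app L)).1 inferInstance c e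
  · rw [← NatTrans.comp_app, leibniz, pushout.inl_desc]
  · rw [← NatTrans.comp_app, leibniz, pushout.inr_desc]

theorem mem_range_inl_or_inr {X Y : Psh C} {c : Cᵒᵖ} (z : (X ⨿ Y).obj c) :
    (∃ x, (coprod.inl : X ⟶ X ⨿ Y).app c x = z) ∨ ∃ y, (coprod.inr : Y ⟶ X ⨿ Y).app c y = z := by
  let M := Subfunctor.range (coprod.inl : X ⟶ X ⨿ Y) ⊔ Subfunctor.range (coprod.inr : Y ⟶ X ⨿ Y)
  let r : X ⨿ Y ⟶ M.toFunctor := coprod.desc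
    (Subfunctor.lift coprod.inl (le_sup_left : _ ≤ M))
    (Subfunctor.lift coprod.inr (le_sup_right : _ ≤ M))
  have hr : r ≫ M.ι = 𝟙 _ := by
    apply coprod.hom_ext
    · rw [coprod.inl_desc_assoc, Subfunctor.lift_ι, comp_id]
    · rw [coprod.inr_desc_assoc, Subfunctor.lift_ι, comp_id]
  have hz : M.ι.app c (r.app c z) = z := ConcreteCategory.congr_hom (NatTrans.congr_app hr c) z
  exact hz ▸ (r.app c z).2

/-- The functor `X ↦ X + X`, thought of as `X ⊗ ∂I`. -/
noncomputable def boundary (C : Type u) [SmallCategory C] : Psh C ⥤ Psh C where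
  obj X := X ⨿ X
  map f := coprod.map f f

instance : (boundary C).IsLeftAdjoint :=
  ⟨{ obj := fun X => X ⨯ X, map := fun f => Limits.prod.map f f }, ⟨Adjunction.mkOfHomEquiv
    { homEquiv := fun X Y =>
        { toFun := fun f => prod.lift (coprod.inl ≫ f) (coprod.inr ≫ f)
          invFun := fun g => coprod.desc (g ≫ prod.fst) (g ≫ prod.snd)
          left_inv := fun f => by
            apply coprod.hom_ext <;> simp only [prod.lift_fst, prod.lift_snd, coprod.inl_desc,
              coprod.inr_desc]
          right_inv := fun g => by
            apply Limits.prod.hom_ext <;> simp only [prod.lift_fst, prod.lift_snd, coprod.inl_desc,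
              coprod.inr_desc] }
      homEquiv_naturality_left_symm := fun f g => by
        change coprod.desc _ _ = coprod.map f f ≫ coprod.desc _ _
        simp only [coprod.map_desc, assoc]
      homEquiv_naturality_right := fun f g => by
        change prod.lift _ _ = prod.lift _ _ ≫ Limits.prod.map g g
        rw [prod.lift_map]
        exact congr_arg₂ prod.lift (assoc _ _ _).symm (assoc _ _ _).symm }⟩⟩

namespace ElementaryHomotopyData

variable (E : ElementaryHomotopyData C)

/-- The natural transformation `[∂⁰, ∂¹] : X + X ⟶ X ⊗ I`. -/
noncomputable def boundaryIncl : boundary C ⟶ E.cyl where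
  app X := coprod.desc (E.d0.app X) (E.d1.app X)
  naturality X Y f := by
    change coprod.map f f ≫ coprod.desc _ _ = coprod.desc _ _ ≫ _
    rw [coprod.map_desc, coprod.desc_comp, ← E.d0.naturality, ← E.d1.naturality]
    rfl

instance (X : Psh C) : Mono (E.d0.app X) := (SplitMono.mk _ (E.d0_σ X)).mono

instance (X : Psh C) : Mono (E.d1.app X) := (SplitMono.mk _ (E.d1_σ X)).mono

instance : E.cyl.PreservesMonomorphisms := ⟨fun j hj => E.preservesMono j hj⟩

instance : E.cyl.IsLeftAdjoint :=
  have := E.preservesColimits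
  Presheaf.isLeftAdjoint_of_preservesColimits.{u, u, u} (C := Cᵒᵖ) E.cyl

theorem isPullback_boundaryIncl {K L : Psh C} (j : K ⟶ L) [hj : Mono j] :
    IsPullback ((boundary C).map j) (E.boundaryIncl.app K) (E.boundaryIncl.app L)
      (E.cyl.map j) := by
  refine IsPullback.of_forall_isPullback_app fun c => (Types.isPullback_iff _ _ _ _).2
    ⟨NatTrans.congr_app (E.boundaryIncl.naturality j) c, fun x y h =>
      (mono_iff_injective_app _).1 (E.mono_pair K) c h.2, fun z y h => ?_⟩
  have inl_app (X : Psh C) : coprod.inl ≫ E.boundaryIncl.app X = E.d0.app X := coprod.inl_desc _ _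
  have inr_app (X : Psh C) : coprod.inr ≫ E.boundaryIncl.app X = E.d1.app X := coprod.inr_desc _ _
  rcases mem_range_inl_or_inr z with ⟨l, rfl⟩ | ⟨l, rfl⟩
  · obtain ⟨k, rfl, rfl⟩ := Types.exists_of_isPullback ((E.isPullback0 j hj).app c) l y
      ((ConcreteCategory.congr_hom (NatTrans.congr_app (inl_app L) c) l).symm.trans h)
    exact ⟨(coprod.inl : K ⟶ K ⨿ K).app c k,
      ConcreteCategory.congr_hom (NatTrans.congr_app (coprod.inl_map j j) c) k,
      ConcreteCategory.congr_hom (NatTrans.congr_app (inl_app K) c) k⟩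
  · obtain ⟨k, rfl, rfl⟩ := Types.exists_of_isPullback ((E.isPullback1 j hj).app c) l y
      ((ConcreteCategory.congr_hom (NatTrans.congr_app (inr_app L) c) l).symm.trans h)
    exact ⟨(coprod.inr : K ⟶ K ⨿ K).app c k,
      ConcreteCategory.congr_hom (NatTrans.congr_app (coprod.inr_map j j) c) k,
      ConcreteCategory.congr_hom (NatTrans.congr_app (inr_app K) c) k⟩

instance {K L : Psh C} (j : K ⟶ L) [hj : Mono j] : Mono (E.gluing0 j) :=
  mono_leibniz (τ := E.d0) (E.isPullback0 j hj)

instance {K L : Psh C} (j : K ⟶ L) [hj : Mono j] : Mono (E.gluing1 j) :=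
  mono_leibniz (τ := E.d1) (E.isPullback1 j hj)

instance {K L : Psh C} (j : K ⟶ L) [Mono j] : Mono (E.gluingBoth j) :=
  have : Mono (E.boundaryIncl.app L) := E.mono_pair L
  mono_leibniz (E.isPullback_boundaryIncl j)

end ElementaryHomotopyData

end LeibnizPresheaf

/-! ### Classes generated by a set of cells -/

section CellGeneration

variable {C : Type u} [SmallCategory C] {κ : Cardinal.{u}}

theorem hasCardinalLT_elements_range {X Y : Psh C} (f : X ⟶ Y)
    (hX : HasCardinalLT X.Elements κ) :
    HasCardinalLT (Subfunctor.range f).toFunctor.Elements κ := by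
  refine hX.of_surjective (CategoryOfElements.map (Subfunctor.toRange f)).obj ?_
  rintro ⟨c, _, x, rfl⟩
  exact ⟨⟨c, x⟩, rfl⟩

theorem hasCardinalLT_elements_ofSection (hκ : ∀ c : C, HasCardinalLT (yoneda.obj c).Elements κ)
    {X : Psh C} {c : Cᵒᵖ} (x : X.obj c) :
    HasCardinalLT (Subfunctor.ofSection x).toFunctor.Elements κ :=
  Subfunctor.ofSection_eq_range x ▸ hasCardinalLT_elements_range _ (hκ c.unop)

theorem hasCardinalLT_elements_iSup [Fact κ.IsRegular] {X : Psh C} {ι : Type*}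
    (hι : HasCardinalLT ι κ) {N : ι → Subfunctor X}
    (hN : ∀ i, HasCardinalLT (N i).toFunctor.Elements κ) :
    HasCardinalLT (⨆ i, N i).toFunctor.Elements κ := by
  refine (hasCardinalLT_sigma _ κ hι hN).of_surjective
    (fun x => (CategoryOfElements.map (Subfunctor.homOfLe (le_iSup N x.1))).obj x.2) ?_
  rintro ⟨c, x, hx⟩
  obtain ⟨i, hi⟩ := Set.mem_iUnion.1 (Subfunctor.iSup_obj N c ▸ hx)
  exact ⟨⟨i, c, x, hi⟩, rfl⟩

variable (C κ) in
/-- The presheaves valued in the category of subsets of a fixed set of cardinality `κ`. Unlike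
the presheaves of cardinality less than `κ`, all of which occur here up to isomorphism, they form
a type in `Type u`. -/
abbrev SmallPsh : Type u :=
  Cᵒᵖ ⥤ InducedCategory (Type u) fun s : Set κ.out => (s : Type u)

theorem exists_iso_smallPsh {X : Psh C} (hX : HasCardinalLT X.Elements κ) :
    ∃ F : SmallPsh C κ, Nonempty (F ⋙ inducedFunctor _ ≅ X) := by
  have hobj (c : Cᵒᵖ) : Cardinal.mk (X.obj c) ≤ Cardinal.mk κ.out := by
    have hc : Function.Injective (X.elementsMk c) := fun _ _ h => eq_of_heq (Sigma.mk.inj h).2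
    rw [Cardinal.mk_out]
    exact ((hasCardinalLT_iff_cardinal_mk_lt _ _).1 (hX.of_injective _ hc)).le
  have hmem (c : Cᵒᵖ) :
      (inducedFunctor fun s : Set κ.out => (s : Type u)).essImage (X.obj c) := by
    obtain ⟨φ⟩ := hobj c
    exact ⟨Set.range φ, ⟨(Equiv.ofInjective φ φ.injective).symm.toIso⟩⟩
  exact ⟨_, ⟨Functor.essImage.liftFunctorCompIso X _ hmem⟩⟩

/-- The inclusions satisfying `Φ` of subpresheaves of presheaves of cardinality less than `κ`. -/
def smallCells (κ : Cardinal.{u}) (Φ : MorphismProperty (Psh C)) : Cells C where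
  J := { x : Σ F : SmallPsh C κ, Subfunctor (F ⋙ inducedFunctor _) // Φ x.2.ι }
  B x := x.1.1 ⋙ inducedFunctor _
  A x := x.1.2

theorem smallCells_inclusions_le (Φ : MorphismProperty (Psh C)) :
    (smallCells κ Φ).inclusions ≤ Φ := by
  rintro _ _ _ ⟨x⟩
  exact x.2

theorem hasLiftingProperty_of_smallCells {Φ : MorphismProperty (Psh C)} [Φ.RespectsIso]
    {X Y : Psh C} {p : X ⟶ Y} (hp : (smallCells κ Φ).inclusions.rlp p) {K L : Psh C}
    (hL : HasCardinalLT L.Elements κ) {i : K ⟶ L} [Mono i] (hi : Φ i) :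
    HasLiftingProperty i p := by
  obtain ⟨F, ⟨e⟩⟩ := exists_iso_smallPsh hL
  let A := Subfunctor.range (i ≫ e.inv)
  have iso : Arrow.mk i ≅ Arrow.mk A.ι :=
    Arrow.isoMk (asIso (Subfunctor.toRange (i ≫ e.inv))) e.symm rfl
  have : HasLiftingProperty A.ι p :=
    Cells.rlp_inclusions_iff.1 hp ⟨⟨F, A⟩, (Φ.arrow_mk_iso_iff iso).1 hi⟩
  exact HasLiftingProperty.of_arrow_iso_left iso.symm p

/-- A class of morphisms is generated by cells if it has the same right lifting property as some
small family of inclusions of subpresheaves. -/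
def IsGeneratedByCells (P : MorphismProperty (Psh C)) : Prop :=
  ∃ S : Cells C, S.inclusions.rlp = P.rlp

/-- The Leibniz maps with `τ` of the morphisms of a class `P`. -/
inductive LeibnizImage {F G : Psh C ⥤ Psh C} (τ : F ⟶ G) (P : MorphismProperty (Psh C)) :
    MorphismProperty (Psh C)
  | mk ⦃K L : Psh C⦄ (j : K ⟶ L) (hj : P j) : LeibnizImage τ P (leibniz τ j)

theorem leibnizImage_rlp_iff {F G F' G' : Psh C ⥤ Psh C} (adjF : F ⊣ F') (adjG : G ⊣ G')
    {τ : F ⟶ G} {P : MorphismProperty (Psh C)} {X Y : Psh C} {p : X ⟶ Y} :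
    (LeibnizImage τ P).rlp p ↔ P.rlp (pullbackHom (conjugateEquiv adjG adjF τ) p) :=
  ⟨fun h _ _ j hj => (hasLiftingProperty_leibniz_iff_pullbackHom adjF adjG).1 (h _ ⟨j, hj⟩),
    fun h _ _ _ ⟨j, hj⟩ => (hasLiftingProperty_leibniz_iff_pullbackHom adjF adjG).2 (h j hj)⟩

namespace IsGeneratedByCells

theorem ofHoms {J : Type u} {K L : J → Psh C} (f : ∀ j, K j ⟶ L j) [∀ j, Mono (f j)] :
    IsGeneratedByCells (.ofHoms f) := by
  refine ⟨⟨J, L, fun j => Subfunctor.range (f j)⟩, ?_⟩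
  ext X Y p
  rw [Cells.rlp_inclusions_iff]
  exact ⟨fun h _ _ _ ⟨j⟩ => hasLiftingProperty_range_ι_iff.1 (h j),
    fun h j => hasLiftingProperty_range_ι_iff.2 (h _ ⟨j⟩)⟩

theorem iSup {ι : Type*} [Small.{u} ι] {P : ι → MorphismProperty (Psh C)}
    (h : ∀ i, IsGeneratedByCells (P i)) : IsGeneratedByCells (⨆ i, P i) := by
  choose S hS using h
  let e := equivShrink.{u} ι
  refine ⟨⟨Σ i, (S (e.symm i)).J, fun x => (S _).B x.2, fun x => (S _).A x.2⟩, ?_⟩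
  ext X Y p
  calc _ ↔ ∀ i, (P i).rlp p := by
        simp only [← hS, Cells.rlp_inclusions_iff, Sigma.forall]
        exact e.symm.forall_congr_right (q := fun i => ∀ j, HasLiftingProperty ((S i).A j).ι p)
    _ ↔ _ := ⟨fun h _ _ _ hi => have ⟨i, hi⟩ := (MorphismProperty.iSup_iff _ _).1 hi; h i _ hi,
        fun h i _ _ _ hi => h _ ((MorphismProperty.iSup_iff _ _).2 ⟨i, hi⟩)⟩

theorem sup {P Q : MorphismProperty (Psh C)} (hP : IsGeneratedByCells P)
    (hQ : IsGeneratedByCells Q) : IsGeneratedByCells (P ⊔ Q) := by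
  rw [sup_eq_iSup]
  exact .iSup (Bool.rec hQ hP)

theorem leibnizImage {F G : Psh C ⥤ Psh C} [F.IsLeftAdjoint] [G.IsLeftAdjoint] {τ : F ⟶ G}
    (hτ : ∀ ⦃K L : Psh C⦄ (j : K ⟶ L), Mono j → Mono (leibniz τ j))
    {P : MorphismProperty (Psh C)} (hP : IsGeneratedByCells P) :
    IsGeneratedByCells (LeibnizImage τ P) := by
  obtain ⟨S, hS⟩ := hP
  have := fun j => hτ (S.A j).ι inferInstance
  obtain ⟨S', hS'⟩ := ofHoms fun j => leibniz τ (S.A j).ι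
  refine ⟨S', hS'.trans ?_⟩
  have : MorphismProperty.ofHoms (fun j => leibniz τ (S.A j).ι) = LeibnizImage τ S.inclusions := by
    ext K L i
    constructor
    · rintro ⟨j⟩
      exact ⟨_, ⟨j⟩⟩
    · rintro ⟨_, ⟨j⟩⟩
      exact ⟨j⟩
  ext X Y p
  have adjF := Adjunction.ofIsLeftAdjoint F
  have adjG := Adjunction.ofIsLeftAdjoint G
  rw [this, leibnizImage_rlp_iff adjF adjG, leibnizImage_rlp_iff adjF adjG, hS]

theorem hasFactorization {P : MorphismProperty (Psh C)} (hP : IsGeneratedByCells P) :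
    P.rlp.llp.HasFactorization P.rlp := by
  obtain ⟨S, hS⟩ := hP
  exact hS ▸ Cells.hasFactorization S

theorem isWFS {P : MorphismProperty (Psh C)} (hP : IsGeneratedByCells P) (h : P.rlp.llp ≤ P) :
    IsWFS P P.rlp where
  lift _ _ _ _ _ _ hf hg := hg _ hf
  llp _ _ _ hf := h _ hf
  rlp _ _ _ hg := hg
  fact _ _ f :=
    have := hP.hasFactorization
    let φ := MorphismProperty.factorizationData P.rlp.llp P.rlp f
    ⟨φ.Z, φ.i, φ.p, h _ φ.hi, φ.hp, φ.fac⟩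

variable (C) in
theorem monomorphisms : IsGeneratedByCells (MorphismProperty.monomorphisms (Psh C)) := by
  obtain ⟨κ, -, hκ⟩ := HasCardinalLT.exists_regular_cardinal_forall.{u} fun c : C =>
    (yoneda.obj c).Elements
  refine ⟨smallCells κ (.monomorphisms _), ?_⟩
  refine le_antisymm (fun X Y p hp K L i hi => ?_)
    (MorphismProperty.antitone_rlp (smallCells_inclusions_le _))
  have : Mono i := hi
  rw [← hasLiftingProperty_range_ι_iff]
  refine hasLiftingProperty_ι_of_exists_extension (𝒢 := Set.univ) (fun _ _ _ => trivial)
    (fun M _ hM => ?_) trivial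
  obtain ⟨c, x, hx⟩ : ∃ c, ∃ x : L.obj c, x ∉ M.obj c := by
    by_contra! h
    exact hM (top_le_iff.1 fun c x _ => h c x)
  have := hasLiftingProperty_of_smallCells hp (hasCardinalLT_elements_ofSection hκ x)
    (i := Subfunctor.homOfLe (inf_le_right : M ⊓ .ofSection x ≤ .ofSection x))
    (.infer_property _)
  have hlt : M < M ⊔ .ofSection x :=
    left_lt_sup.2 fun h => hx ((Subfunctor.ofSection_le_iff _ _).1 h)
  exact ⟨_, trivial, hlt, hasLiftingProperty_homOfLe_sup⟩

end IsGeneratedByCells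

variable (C) in
theorem monomorphisms_rlp_llp :
    (MorphismProperty.monomorphisms (Psh C)).rlp.llp = .monomorphisms (Psh C) := by
  refine le_antisymm (fun X Y f hf => ?_) (MorphismProperty.le_llp_rlp _)
  obtain ⟨S, hS⟩ := IsGeneratedByCells.monomorphisms C
  obtain ⟨l, hl⟩ := hasLiftingProperty_terminal_iff.1 (hf _ (hS ▸ Rep.rlp_terminal_from X))
    ((Rep.η S).app X)
  have : Mono (f ≫ l) := by
    rw [hl]
    infer_instance
  exact mono_of_mono f l

namespace ElementaryHomotopyData

variable (E : ElementaryHomotopyData C) {U : MorphismProperty (Psh C)}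

theorem lambda0_eq (U : MorphismProperty (Psh C)) :
    E.Lambda0 U = U ⊔ (LeibnizImage E.d0 (.monomorphisms _) ⊔
      LeibnizImage E.d1 (.monomorphisms _)) := by
  ext K L i
  constructor
  · rintro (⟨_, h⟩ | ⟨j, hj⟩ | ⟨j, hj⟩)
    · exact .inl h
    · exact .inr (.inl ⟨j, hj⟩)
    · exact .inr (.inr ⟨j, hj⟩)
  · rintro (h | ⟨⟨j, hj⟩⟩ | ⟨⟨j, hj⟩⟩)
    · exact .ofS _ h
    · exact .glue0 j hj
    · exact .glue1 j hj

theorem lambdaN_succ_eq (U : MorphismProperty (Psh C)) (n : ℕ) :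
    E.LambdaN U (n + 1) = LeibnizImage E.boundaryIncl (E.LambdaN U n) := by
  ext K L i
  constructor <;> rintro ⟨j, hj⟩ <;> exact ⟨j, hj⟩

theorem lambda_eq (U : MorphismProperty (Psh C)) : E.Lambda U = ⨆ n, E.LambdaN U n := by
  ext K L i
  rw [MorphismProperty.iSup_iff]
  rfl

theorem isGeneratedByCells_lambda (hU : IsGeneratedByCells U) :
    IsGeneratedByCells (E.Lambda U) := by
  rw [lambda_eq]
  refine .iSup fun n => ?_
  induction n with
  | zero =>
    rw [LambdaN, lambda0_eq]
    exact hU.sup (.sup (.leibnizImage (fun _ _ j _ => inferInstanceAs (Mono (E.gluing0 j)))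
      (.monomorphisms C)) (.leibnizImage (fun _ _ j _ => inferInstanceAs (Mono (E.gluing1 j)))
      (.monomorphisms C)))
  | succ n ih =>
    rw [lambdaN_succ_eq]
    exact ih.leibnizImage fun _ _ j _ => inferInstanceAs (Mono (E.gluingBoth j))

end ElementaryHomotopyData

end CellGeneration

/-! ### Homotopies and naive fibrations -/

theorem hasLiftingProperty_coprod_map {D : Type*} [Category D] [HasBinaryCoproducts D]
    {K K' L L' X Y : D} (f : K ⟶ L) (g : K' ⟶ L') (p : X ⟶ Y) [HasLiftingProperty f p]
    [HasLiftingProperty g p] : HasLiftingProperty (coprod.map f g) p := by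
  refine hasLiftingProperty_iff_exists_lift.2 fun a b w => ?_
  obtain ⟨l₀, h₀, h₀'⟩ := hasLiftingProperty_iff_exists_lift.1 ‹HasLiftingProperty f p›
    (coprod.inl ≫ a) (coprod.inl ≫ b) (by rw [assoc, w, coprod.inl_map_assoc])
  obtain ⟨l₁, h₁, h₁'⟩ := hasLiftingProperty_iff_exists_lift.1 ‹HasLiftingProperty g p›
    (coprod.inr ≫ a) (coprod.inr ≫ b) (by rw [assoc, w, coprod.inr_map_assoc])
  refine ⟨coprod.desc l₀ l₁, ?_, ?_⟩
  · ext <;> simpa only [coprod.map_desc, coprod.inl_desc, coprod.inr_desc]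
  · ext <;> simpa only [coprod.inl_desc_assoc, coprod.inr_desc_assoc]

namespace ElementaryHomotopyData

section HomotopyClasses

variable {C : Type u} [SmallCategory C] {E : ElementaryHomotopyData C}

theorem d0_σ_assoc {X Y : Psh C} (f : X ⟶ Y) : E.d0.app X ≫ E.σ.app X ≫ f = f :=
  (assoc _ _ _).symm.trans ((E.d0_σ X =≫ f).trans (id_comp f))

theorem d1_σ_assoc {X Y : Psh C} (f : X ⟶ Y) : E.d1.app X ≫ E.σ.app X ≫ f = f :=
  (assoc _ _ _).symm.trans ((E.d1_σ X =≫ f).trans (id_comp f))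

theorem d0_cyl_map_assoc {K L X : Psh C} (j : K ⟶ L) (f : E.cyl.obj L ⟶ X) :
    E.d0.app K ≫ E.cyl.map j ≫ f = j ≫ E.d0.app L ≫ f :=
  (E.d0.naturality_assoc j f).symm

theorem d1_cyl_map_assoc {K L X : Psh C} (j : K ⟶ L) (f : E.cyl.obj L ⟶ X) :
    E.d1.app K ≫ E.cyl.map j ≫ f = j ≫ E.d1.app L ≫ f :=
  (E.d1.naturality_assoc j f).symm

theorem cyl_coprod_hom_ext {X Y Z : Psh C} {f g : E.cyl.obj (X ⨿ Y) ⟶ Z}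
    (h₀ : E.cyl.map coprod.inl ≫ f = E.cyl.map coprod.inl ≫ g)
    (h₁ : E.cyl.map coprod.inr ≫ f = E.cyl.map coprod.inr ≫ g) : f = g :=
  BinaryCofan.IsColimit.hom_ext (isColimitOfHasBinaryCoproductOfPreservesColimit E.cyl X Y) h₀ h₁

theorem exists_cyl_coprod_desc {X Y Z : Psh C} (f : E.cyl.obj X ⟶ Z) (g : E.cyl.obj Y ⟶ Z) :
    ∃ k : E.cyl.obj (X ⨿ Y) ⟶ Z, E.cyl.map coprod.inl ≫ k = f ∧ E.cyl.map coprod.inr ≫ k = g :=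
  let k := BinaryCofan.IsColimit.desc'
    (isColimitOfHasBinaryCoproductOfPreservesColimit E.cyl X Y) f g
  ⟨k.1, k.2⟩

theorem Htpy.refl {X Y : Psh C} (f : X ⟶ Y) : E.Htpy f f :=
  ⟨E.σ.app X ≫ f, d0_σ_assoc f, d1_σ_assoc f⟩

theorem Htpy.comp_right {X Y Z : Psh C} {f g : X ⟶ Y} (h : E.Htpy f g) (k : Y ⟶ Z) :
    E.Htpy (f ≫ k) (g ≫ k) := by
  obtain ⟨θ, rfl, rfl⟩ := h
  exact ⟨θ ≫ k, (assoc _ _ _).symm, (assoc _ _ _).symm⟩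

theorem Htpy.comp_left {X Y Z : Psh C} {f g : X ⟶ Y} (h : E.Htpy f g) (k : Z ⟶ X) :
    E.Htpy (k ≫ f) (k ≫ g) := by
  obtain ⟨θ, rfl, rfl⟩ := h
  exact ⟨E.cyl.map k ≫ θ, d0_cyl_map_assoc k θ, d1_cyl_map_assoc k θ⟩

theorem precomp_comp {X Y Z A : Psh C} (f : X ⟶ Y) (g : Y ⟶ Z) :
    E.precomp (A := A) (f ≫ g) = E.precomp f ∘ E.precomp g := by
  funext x
  obtain ⟨h, rfl⟩ := Quot.exists_rep x
  exact congr_arg (HQ.mk E) (assoc f g h)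

/-- The morphisms inducing bijections `[-, A]` for all objects `A` in the class `𝒜`. -/
def localEquivalences (E : ElementaryHomotopyData C) (𝒜 : ObjectProperty (Psh C)) :
    MorphismProperty (Psh C) :=
  fun _ _ f => ∀ A, 𝒜 A → Function.Bijective (E.precomp (A := A) f)

instance (𝒜 : ObjectProperty (Psh C)) : (E.localEquivalences 𝒜).HasTwoOutOfThreeProperty where
  comp_mem f g hf hg A hA := by
    rw [precomp_comp]
    exact (hf A hA).comp (hg A hA)
  of_postcomp f g hg hfg A hA := by
    have h := hfg A hA
    rw [precomp_comp] at h
    exact (Function.Bijective.of_comp_iff _ (hg A hA)).1 h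
  of_precomp f g hf hfg A hA := by
    have h := hfg A hA
    rw [precomp_comp] at h
    exact (Function.Bijective.of_comp_iff' (hf A hA) _).1 h

end HomotopyClasses

section NaiveFibrations

variable {C : Type u} [SmallCategory C] {E : ElementaryHomotopyData C}
  {U : MorphismProperty (Psh C)}

/-- The naive fibrations: maps with the right lifting property against `Λ_I(U)`. -/
def naiveFibrations (E : ElementaryHomotopyData C) (U : MorphismProperty (Psh C)) :
    MorphismProperty (Psh C) :=
  (E.Lambda U).rlp

theorem naivelyFibrant_iff {A : Psh C} :
    E.NaivelyFibrant U A ↔ E.naiveFibrations U (terminal.from A) :=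
  iff_of_eq (congr_arg (fun P : MorphismProperty (Psh C) => P (terminal.from A))
    (MorphismProperty.rlp_llp_rlp (E.Lambda U)))

theorem naivelyFibrant_of_naiveFibrations {X Y : Psh C} {p : X ⟶ Y}
    (hp : E.naiveFibrations U p) (hY : E.NaivelyFibrant U Y) : E.NaivelyFibrant U X := by
  rw [naivelyFibrant_iff, ← terminal.hom_ext (p ≫ terminal.from Y) (terminal.from X)]
  exact (E.Lambda U).rlp.comp_mem _ _ hp (naivelyFibrant_iff.1 hY)

theorem naivelyFibrant_terminal : E.NaivelyFibrant U (⊤_ Psh C) :=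
  fun _ _ _ _ => hasLiftingProperty_terminal_iff.2 fun _ =>
    ⟨terminal.from _, terminal.hom_ext _ _⟩

theorem NaivelyFibrant.exists_extension {A : Psh C} (hA : E.NaivelyFibrant U A) {K L : Psh C}
    {i : K ⟶ L} (hi : E.Anodyne U i) (u : K ⟶ A) : ∃ l : L ⟶ A, i ≫ l = u :=
  hasLiftingProperty_terminal_iff.1 (hA i hi) u

theorem exists_box_lift {X Y : Psh C} {p : X ⟶ Y} (hp : E.naiveFibrations U p) {K L : Psh C}
    (j : K ⟶ L) [hj : Mono j] (a : E.cyl.obj K ⟶ X) (b : L ⟶ X) (c : E.cyl.obj L ⟶ Y)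
    (hab : E.d0.app K ≫ a = j ≫ b) (hac : a ≫ p = E.cyl.map j ≫ c)
    (hbc : b ≫ p = E.d0.app L ≫ c) :
    ∃ θ : E.cyl.obj L ⟶ X, E.cyl.map j ≫ θ = a ∧ E.d0.app L ≫ θ = b ∧ θ ≫ p = c :=
  (hasLiftingProperty_leibniz_iff (τ := E.d0)).1 (hp _ ⟨0, .glue0 j hj⟩) a b c hab hac hbc

theorem exists_homotopy_lift {X Y : Psh C} {p : X ⟶ Y} (hp : E.naiveFibrations U p) {L : Psh C}
    (b : L ⟶ X) (c : E.cyl.obj L ⟶ Y) (hbc : b ≫ p = E.d0.app L ≫ c) :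
    ∃ θ : E.cyl.obj L ⟶ X, E.d0.app L ≫ θ = b ∧ θ ≫ p = c := by
  have hI : IsInitial (E.cyl.obj (⊥_ Psh C)) := initialIsInitial.isInitialObj E.cyl
  obtain ⟨θ, -, hθ⟩ := exists_box_lift hp (initial.to L) (hI.to X) b c (initial.hom_ext _ _)
    (hI.hom_ext _ _) hbc
  exact ⟨θ, hθ⟩

-- The maps `b₀`, `b₁` and `c` are three sides of a square, whose fourth side `d` is obtained by
-- filling the open box on `X + X ⟶ X ⊗ I`.
theorem exists_homotopy_of_square {X A Y : Psh C} {p : A ⟶ Y} (hp : E.naiveFibrations U p)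
    (b₀ b₁ c : E.cyl.obj X ⟶ A) (β : E.cyl.obj (E.cyl.obj X) ⟶ Y)
    (h₀ : E.d0.app X ≫ b₀ = E.d0.app X ≫ c) (h₁ : E.d0.app X ≫ b₁ = E.d1.app X ≫ c)
    (hb₀ : b₀ ≫ p = E.cyl.map (E.d0.app X) ≫ β) (hb₁ : b₁ ≫ p = E.cyl.map (E.d1.app X) ≫ β)
    (hc : c ≫ p = E.d0.app (E.cyl.obj X) ≫ β) :
    ∃ d : E.cyl.obj X ⟶ A, E.d0.app X ≫ d = E.d1.app X ≫ b₀ ∧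
      E.d1.app X ≫ d = E.d1.app X ≫ b₁ ∧ d ≫ p = E.d1.app (E.cyl.obj X) ≫ β := by
  let j : X ⨿ X ⟶ E.cyl.obj X := coprod.desc (E.d0.app X) (E.d1.app X)
  have : Mono j := E.mono_pair X
  have hj₀ : coprod.inl ≫ j = E.d0.app X := coprod.inl_desc _ _
  have hj₁ : coprod.inr ≫ j = E.d1.app X := coprod.inr_desc _ _
  obtain ⟨a, ha₀, ha₁⟩ := exists_cyl_coprod_desc b₀ b₁
  obtain ⟨θ, hθa, _, hθ⟩ := exists_box_lift hp j a c β
    (by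
      apply coprod.hom_ext
      · rw [← d0_cyl_map_assoc, ha₀, h₀, reassoc_of% hj₀]
      · rw [← d0_cyl_map_assoc, ha₁, h₁, reassoc_of% hj₁])
    (cyl_coprod_hom_ext (by rw [reassoc_of% ha₀, hb₀, ← E.cyl.map_comp_assoc, hj₀])
      (by rw [reassoc_of% ha₁, hb₁, ← E.cyl.map_comp_assoc, hj₁]))
    hc
  have hθ₀ : E.cyl.map (E.d0.app X) ≫ θ = b₀ := by rw [← hj₀, E.cyl.map_comp_assoc, hθa, ha₀]
  have hθ₁ : E.cyl.map (E.d1.app X) ≫ θ = b₁ := by rw [← hj₁, E.cyl.map_comp_assoc, hθa, ha₁]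
  exact ⟨E.d1.app _ ≫ θ, (d1_cyl_map_assoc (E.d0.app X) θ).symm.trans (E.d1.app X ≫= hθ₀),
    (d1_cyl_map_assoc (E.d1.app X) θ).symm.trans (E.d1.app X ≫= hθ₁), by rw [assoc, hθ]⟩

theorem NaivelyFibrant.exists_homotopy_of_square {X A : Psh C} (hA : E.NaivelyFibrant U A)
    (b₀ b₁ c : E.cyl.obj X ⟶ A) (h₀ : E.d0.app X ≫ b₀ = E.d0.app X ≫ c)
    (h₁ : E.d0.app X ≫ b₁ = E.d1.app X ≫ c) : E.Htpy (E.d1.app X ≫ b₀) (E.d1.app X ≫ b₁) :=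
  let ⟨d, hd₀, hd₁, _⟩ := ElementaryHomotopyData.exists_homotopy_of_square
    (naivelyFibrant_iff.1 hA) b₀ b₁ c (terminal.from _) h₀ h₁ (terminal.hom_ext _ _)
    (terminal.hom_ext _ _) (terminal.hom_ext _ _)
  ⟨d, hd₀, hd₁⟩

theorem NaivelyFibrant.htpy_symm {X A : Psh C} (hA : E.NaivelyFibrant U A) {f g : X ⟶ A}
    (h : E.Htpy f g) : E.Htpy g f := by
  obtain ⟨θ, rfl, rfl⟩ := h
  have h := hA.exists_homotopy_of_square θ (E.σ.app X ≫ E.d0.app X ≫ θ)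
    (E.σ.app X ≫ E.d0.app X ≫ θ) (by rw [d0_σ_assoc])
    (by rw [d0_σ_assoc, d1_σ_assoc])
  rwa [d1_σ_assoc] at h

theorem NaivelyFibrant.htpy_trans {X A : Psh C} (hA : E.NaivelyFibrant U A) {f g k : X ⟶ A}
    (hfg : E.Htpy f g) (hgk : E.Htpy g k) : E.Htpy f k := by
  obtain ⟨θ, rfl, rfl⟩ := hfg
  obtain ⟨θ', h, rfl⟩ := hgk
  have h := hA.exists_homotopy_of_square (E.σ.app X ≫ E.d0.app X ≫ θ) θ' θ
    (by rw [d0_σ_assoc]) h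
  rwa [d1_σ_assoc] at h

theorem NaivelyFibrant.mk_eq_mk_iff {X A : Psh C} (hA : E.NaivelyFibrant U A) {f g : X ⟶ A} :
    HQ.mk E f = HQ.mk E g ↔ E.Htpy f g :=
  ⟨fun h => (Equivalence.eqvGen_iff (r := fun a b : X ⟶ A => E.Htpy a b)
    ⟨.refl, hA.htpy_symm, hA.htpy_trans⟩).1 (Quot.eqvGen_exact h), fun h => Quot.sound h⟩

theorem NaivelyFibrant.bijective_precomp_iff {A : Psh C} (hA : E.NaivelyFibrant U A)
    {X Y : Psh C} {f : X ⟶ Y} :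
    Function.Bijective (E.precomp (A := A) f) ↔ (∀ u : X ⟶ A, ∃ v : Y ⟶ A, E.Htpy (f ≫ v) u) ∧
      ∀ v w : Y ⟶ A, E.Htpy (f ≫ v) (f ≫ w) → E.Htpy v w := by
  rw [Function.Bijective, and_comm]
  refine and_congr ?_ ?_
  · exact Quot.mk_surjective.forall.trans <| forall_congr' fun u =>
      Quot.mk_surjective.exists.trans <| exists_congr fun v => hA.mk_eq_mk_iff
  · exact Quot.mk_surjective.forall.trans <| forall_congr' fun v =>
      Quot.mk_surjective.forall.trans <| forall_congr' fun w =>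
        imp_congr hA.mk_eq_mk_iff hA.mk_eq_mk_iff

end NaiveFibrations

end ElementaryHomotopyData

/-! ### Weak equivalences -/

namespace ElementaryHomotopyData

section WeakEquivalences

variable {C : Type u} [SmallCategory C] {E : ElementaryHomotopyData C}
  {U : MorphismProperty (Psh C)}

/-- The weak equivalences of the model structure generated by `Λ_I(U)`: the maps inducing
bijections on homotopy classes of maps into naively fibrant objects. -/
abbrev weakEquivalences (E : ElementaryHomotopyData C) (U : MorphismProperty (Psh C)) :
    MorphismProperty (Psh C) :=
  E.localEquivalences (E.NaivelyFibrant U)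

/-- The naive fibrations with naively fibrant codomain. Among the monomorphisms, the weak
equivalences are the maps with the left lifting property against this class. -/
def naiveFibrationsToFibrant (E : ElementaryHomotopyData C) (U : MorphismProperty (Psh C)) :
    MorphismProperty (Psh C) :=
  fun _ Y p => E.naiveFibrations U p ∧ E.NaivelyFibrant U Y

theorem naiveFibrations_pullbackHom {P B : Psh C ⥤ Psh C} (adjP : E.cyl ⊣ P)
    (adjB : boundary C ⊣ B) {X Y : Psh C} {p : X ⟶ Y} (hp : E.naiveFibrations U p) :
    E.naiveFibrations U (pullbackHom (conjugateEquiv adjP adjB E.boundaryIncl) p) := by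
  rintro K L f ⟨n, hf⟩
  rw [← hasLiftingProperty_leibniz_iff_pullbackHom]
  exact hp _ ⟨n + 1, .glue f hf⟩

theorem NaivelyFibrant.pullback_terminal {P B : Psh C ⥤ Psh C} (adjP : E.cyl ⊣ P)
    (adjB : boundary C ⊣ B) (σ : P ⟶ B) {A : Psh C} (hA : E.NaivelyFibrant U A) :
    E.NaivelyFibrant U (pullback (B.map (terminal.from A)) (σ.app (⊤_ Psh C))) := by
  intro K L f hf
  have : HasLiftingProperty f (terminal.from A) := hA f hf
  have : HasLiftingProperty ((boundary C).map f) (terminal.from A) :=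
    hasLiftingProperty_coprod_map f f _
  have : HasLiftingProperty f (B.map (terminal.from A)) :=
    (adjB.hasLiftingProperty_iff f (terminal.from A)).1 this
  have : IsIso (terminal.from (P.obj (⊤_ Psh C))) := by
    have := adjP.rightAdjoint_preservesLimits
    exact inferInstanceAs (IsIso (terminalComparison P))
  rw [← terminal.hom_ext (pullback.snd _ _ ≫ terminal.from (P.obj (⊤_ Psh C))) (terminal.from _)]
  have := (IsPullback.of_hasPullback (B.map (terminal.from A))
    (σ.app (⊤_ Psh C))).hasLiftingProperty f
  infer_instance

theorem weakEquivalences_of_llp {K L : Psh C} {i : K ⟶ L}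
    (hi : (E.naiveFibrationsToFibrant U).llp i) : E.weakEquivalences U i := by
  intro A hA
  refine hA.bijective_precomp_iff.2 ⟨fun u => ?_, fun v w => ?_⟩
  · obtain ⟨l, hl⟩ := hasLiftingProperty_terminal_iff.1
      (hi _ ⟨naivelyFibrant_iff.1 hA, naivelyFibrant_terminal⟩) u
    exact ⟨l, hl ▸ .refl _⟩
  · rintro ⟨θ, h₀, h₁⟩
    let adjP := Adjunction.ofIsLeftAdjoint E.cyl
    let adjB := Adjunction.ofIsLeftAdjoint (boundary C)
    have := hi _ ⟨naiveFibrations_pullbackHom adjP adjB (naivelyFibrant_iff.1 hA),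
      hA.pullback_terminal adjP adjB _⟩
    rw [← hasLiftingProperty_leibniz_iff_pullbackHom, hasLiftingProperty_leibniz_iff] at this
    obtain ⟨τ, -, hτ, -⟩ := this θ (coprod.desc v w) (terminal.from _)
      (by
        change coprod.desc _ _ ≫ θ = coprod.map i i ≫ coprod.desc v w
        rw [coprod.desc_comp, coprod.map_desc, h₀, h₁])
      (terminal.hom_ext _ _) (terminal.hom_ext _ _)
    change coprod.desc _ _ ≫ τ = _ at hτ
    rw [coprod.desc_comp] at hτ
    have h₀ := coprod.inl ≫= hτ
    have h₁ := coprod.inr ≫= hτ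
    rw [coprod.inl_desc, coprod.inl_desc] at h₀
    rw [coprod.inr_desc, coprod.inr_desc] at h₁
    exact ⟨τ, h₀, h₁⟩

theorem weakEquivalences_of_anodyne {K L : Psh C} {i : K ⟶ L} (hi : E.Anodyne U i) :
    E.weakEquivalences U i :=
  weakEquivalences_of_llp fun _ _ p hp => hi p hp.1

theorem weakEquivalences.exists_extension {K L A : Psh C} {i : K ⟶ L} [Mono i]
    (hi : E.weakEquivalences U i) (hA : E.NaivelyFibrant U A) (u : K ⟶ A) :
    ∃ l : L ⟶ A, i ≫ l = u := by
  obtain ⟨v, θ, h₀, rfl⟩ := (hA.bijective_precomp_iff.1 (hi A hA)).1 u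
  obtain ⟨τ, rfl, -, -⟩ := exists_box_lift (naivelyFibrant_iff.1 hA) i θ v (terminal.from _) h₀
    (terminal.hom_ext _ _) (terminal.hom_ext _ _)
  exact ⟨E.d1.app L ≫ τ, (d1_cyl_map_assoc i τ).symm⟩

theorem exists_section_of_weakEquivalences {M L : Psh C} {q : M ⟶ L}
    (hq : E.naiveFibrations U q) (hL : E.NaivelyFibrant U L) (hw : E.weakEquivalences U q) :
    ∃ s : L ⟶ M, s ≫ q = 𝟙 L ∧ E.Htpy (q ≫ s) (𝟙 M) := by
  have hM := naivelyFibrant_of_naiveFibrations hq hL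
  obtain ⟨s₀, hs₀⟩ := (hM.bijective_precomp_iff.1 (hw M hM)).1 (𝟙 M)
  obtain ⟨θ, h₀, h₁⟩ : E.Htpy (s₀ ≫ q) (𝟙 L) := by
    refine (hL.bijective_precomp_iff.1 (hw L hL)).2 _ _ ?_
    simpa only [assoc, id_comp, comp_id] using hs₀.comp_right q
  obtain ⟨θ', h₀', rfl⟩ := exists_homotopy_lift hq s₀ θ h₀.symm
  have hs : E.Htpy s₀ (E.d1.app L ≫ θ') := ⟨θ', h₀', rfl⟩
  exact ⟨E.d1.app L ≫ θ', by rw [assoc, h₁],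
    hM.htpy_trans (hM.htpy_symm (hs.comp_left q)) hs₀⟩

theorem exists_fiberwise_homotopy {M L : Psh C} {q : M ⟶ L} (hq : E.naiveFibrations U q)
    {s : L ⟶ M} (hs : s ≫ q = 𝟙 L) (h : E.Htpy (q ≫ s) (𝟙 M)) :
    ∃ d : E.cyl.obj M ⟶ M, E.d0.app M ≫ d = q ≫ s ∧ E.d1.app M ≫ d = 𝟙 M ∧
      d ≫ q = E.σ.app M ≫ q := by
  obtain ⟨θ, h₀, h₁⟩ := h
  have h₀q : E.d0.app M ≫ θ ≫ q = (q ≫ s) ≫ q := by rw [reassoc_of% h₀, assoc]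
  have h₁q : E.d1.app M ≫ θ ≫ q = q := by rw [reassoc_of% h₁]
  have cyl_d0_σ : E.cyl.map (E.d0.app M) ≫ E.cyl.map (E.σ.app M) = 𝟙 _ := by
    rw [← E.cyl.map_comp, E.d0_σ]
    exact E.cyl.map_id M
  have cyl_d1_σ : E.cyl.map (E.d1.app M) ≫ E.cyl.map (E.σ.app M) = 𝟙 _ := by
    rw [← E.cyl.map_comp, E.d1_σ]
    exact E.cyl.map_id M
  obtain ⟨d, hd₀, hd₁, hd⟩ := exists_homotopy_of_square hq (θ ≫ q ≫ s) θ (E.σ.app M ≫ q ≫ s)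
    (E.cyl.map (E.σ.app M) ≫ θ ≫ q)
    (by rw [reassoc_of% h₀, reassoc_of% hs, d0_σ_assoc])
    (by rw [h₀, d1_σ_assoc])
    (by rw [reassoc_of% cyl_d0_σ, assoc, assoc, hs, comp_id])
    (by rw [reassoc_of% cyl_d1_σ])
    (by
      rw [d0_cyl_map_assoc, assoc]
      exact E.σ.app M ≫= h₀q.symm)
  refine ⟨d, ?_, hd₁.trans h₁, ?_⟩
  · rw [hd₀, reassoc_of% h₁]
  · rw [hd, d1_cyl_map_assoc]
    exact E.σ.app M ≫= h₁q

theorem monomorphisms_rlp_of_weakEquivalences {M L : Psh C} {q : M ⟶ L}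
    (hq : E.naiveFibrations U q) (hL : E.NaivelyFibrant U L) (hw : E.weakEquivalences U q) :
    (MorphismProperty.monomorphisms (Psh C)).rlp q := by
  intro A B j (hj : Mono j)
  obtain ⟨s, hs, h⟩ := exists_section_of_weakEquivalences hq hL hw
  obtain ⟨d, hd₀, hd₁, hd⟩ := exists_fiberwise_homotopy hq hs h
  refine hasLiftingProperty_iff_exists_lift.2 fun u v huv => ?_
  obtain ⟨τ, hτu, -, hτv⟩ := exists_box_lift hq j (E.cyl.map u ≫ d) (v ≫ s) (E.σ.app B ≫ v)
    (by rw [d0_cyl_map_assoc, hd₀, reassoc_of% huv])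
    (by rw [assoc, hd, E.σ.naturality_assoc, E.σ.naturality_assoc]; exact E.σ.app A ≫= huv)
    (by rw [assoc, hs, comp_id, d0_σ_assoc])
  refine ⟨E.d1.app B ≫ τ, ?_, by rw [assoc, hτv, d1_σ_assoc]⟩
  rw [← d1_cyl_map_assoc, hτu, d1_cyl_map_assoc, hd₁, comp_id]

theorem weakEquivalences_of_monomorphisms_rlp {M L : Psh C} {q : M ⟶ L}
    (hq : (MorphismProperty.monomorphisms (Psh C)).rlp q) : E.weakEquivalences U q := by
  obtain ⟨s, -, hs⟩ := hasLiftingProperty_iff_exists_lift.1 (hq (initial.to L) inferInstance)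
    (initial.to M) (𝟙 L) (initial.hom_ext _ _)
  obtain ⟨θ, hθ, -⟩ := hasLiftingProperty_iff_exists_lift.1 (hq _ (E.mono_pair M))
    (coprod.desc (𝟙 M) (q ≫ s)) (E.σ.app M ≫ q) (by
      rw [coprod.desc_comp, coprod.desc_comp, d0_σ_assoc, d1_σ_assoc, assoc, hs]
      exact congr_arg₂ coprod.desc (id_comp q) (comp_id q))
  rw [coprod.desc_comp] at hθ
  have h₀ := coprod.inl ≫= hθ
  have h₁ := coprod.inr ≫= hθ
  rw [coprod.inl_desc, coprod.inl_desc] at h₀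
  rw [coprod.inr_desc, coprod.inr_desc] at h₁
  have h : E.Htpy (𝟙 M) (q ≫ s) := ⟨θ, h₀, h₁⟩
  refine fun A hA => hA.bijective_precomp_iff.2 ⟨fun u => ⟨s ≫ u, ?_⟩, fun v w hvw => ?_⟩
  · simpa only [assoc, id_comp] using hA.htpy_symm (h.comp_right u)
  · simpa only [reassoc_of% hs] using hvw.comp_left s

section HasFactorization

variable [(E.Anodyne U).HasFactorization (E.naiveFibrations U)]

theorem exists_anodyne_naivelyFibrant (X : Psh C) :
    ∃ (X' : Psh C) (η : X ⟶ X'), E.Anodyne U η ∧ E.NaivelyFibrant U X' :=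
  let φ := MorphismProperty.factorizationData (E.Anodyne U) (E.naiveFibrations U) (terminal.from X)
  ⟨φ.Z, φ.i, φ.hi, naivelyFibrant_of_naiveFibrations φ.hp naivelyFibrant_terminal⟩

theorem llp_naiveFibrationsToFibrant_of_weakEquivalences {K L : Psh C} {i : K ⟶ L} [hi : Mono i]
    (hw : E.weakEquivalences U i) : (E.naiveFibrationsToFibrant U).llp i := by
  rintro X Y p ⟨hp, hY⟩
  obtain ⟨L', η, hη, hL'⟩ := exists_anodyne_naivelyFibrant (E := E) (U := U) L
  let φ := MorphismProperty.factorizationData (E.Anodyne U) (E.naiveFibrations U) (i ≫ η)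
  have hφ : E.weakEquivalences U φ.p := by
    refine (E.weakEquivalences U).of_precomp φ.i φ.p (weakEquivalences_of_anodyne φ.hi) ?_
    rw [φ.fac]
    exact (E.weakEquivalences U).comp_mem _ _ hw (weakEquivalences_of_anodyne hη)
  obtain ⟨m, hmi, hmη⟩ := hasLiftingProperty_iff_exists_lift.1
    (monomorphisms_rlp_of_weakEquivalences φ.hp hL' hφ i hi) φ.i η φ.fac
  refine hasLiftingProperty_iff_exists_lift.2 fun u v huv => ?_
  obtain ⟨v', rfl⟩ := hY.exists_extension hη v
  obtain ⟨l, rfl, hlp⟩ := hasLiftingProperty_iff_exists_lift.1 (φ.hi p hp) u (φ.p ≫ v')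
    (by rw [φ.fac_assoc, huv, assoc])
  exact ⟨m ≫ l, by rw [reassoc_of% hmi], by rw [assoc, hlp, reassoc_of% hmη]⟩

end HasFactorization

theorem weakEquivalences_iff_exists_homotopy {S : Cells C}
    (hS : S.inclusions.rlp = E.naiveFibrations U) {K L : Psh C} {i : K ⟶ L} [Mono i] :
    E.weakEquivalences U i ↔ ∃ r : L ⟶ (Rep S).obj K,
      i ≫ r = (Rep.η S).app K ∧ E.Htpy ((Rep.η S).app L) (r ≫ (Rep S).map i) := by
  have hRep (X : Psh C) : E.NaivelyFibrant U ((Rep S).obj X) :=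
    naivelyFibrant_iff.2 (hS ▸ Rep.rlp_terminal_from X)
  have hη (X : Psh C) : E.Anodyne U ((Rep.η S).app X) :=
    fun _ _ p hp => Rep.llp_η X p (hS ▸ hp)
  have hi : i ≫ (Rep.η S).app L = (Rep.η S).app K ≫ (Rep S).map i := (Rep.η S).naturality i
  refine ⟨fun hw => ?_, fun ⟨r, hr, h⟩ A hA => hA.bijective_precomp_iff.2
    ⟨fun u => ?_, fun v w hvw => ?_⟩⟩
  · obtain ⟨r, hr⟩ := hw.exists_extension (hRep K) ((Rep.η S).app K)
    refine ⟨r, hr, ((hRep L).bijective_precomp_iff.1 (hw _ (hRep L))).2 _ _ ?_⟩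
    rw [hi, reassoc_of% hr]
    exact .refl _
  · obtain ⟨u', rfl⟩ := hA.exists_extension (hη K) u
    exact ⟨r ≫ u', by rw [reassoc_of% hr]; exact .refl _⟩
  · obtain ⟨v', rfl⟩ := hA.exists_extension (hη L) v
    obtain ⟨w', rfl⟩ := hA.exists_extension (hη L) w
    have key : E.Htpy ((Rep S).map i ≫ v') ((Rep S).map i ≫ w') := by
      refine (hA.bijective_precomp_iff.1 (weakEquivalences_of_anodyne (hη K) A hA)).2 _ _ ?_
      simpa only [← assoc, hi] using hvw
    have hv := h.comp_right v'
    have hw := h.comp_right w'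
    rw [assoc] at hv hw
    exact hA.htpy_trans hv (hA.htpy_trans (key.comp_left r) (hA.htpy_symm hw))

end WeakEquivalences

end ElementaryHomotopyData

/-! ### A generating set of acyclic monomorphisms -/

section Closure

theorem exists_le_and_map_le {α : Type*} [CompleteLattice α] {l : α → α}
    (hl : ∀ f : ℕ → α, l (⨆ n, f n) = ⨆ n, l (f n)) {P : α → Prop}
    (hP : ∀ f : ℕ → α, (∀ n, P (f n)) → P (⨆ n, f n)) (hlP : ∀ a, P a → P (l a)) {a : α}
    (ha : P a) : ∃ b, a ≤ b ∧ P b ∧ l b ≤ b := by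
  refine ⟨⨆ n, l^[n] a, le_iSup (fun n => l^[n] a) 0, hP _ fun n => ?_, ?_⟩
  · induction n with
    | zero => exact ha
    | succ n ih => exact Function.iterate_succ_apply' l n a ▸ hlP _ ih
  · rw [hl]
    exact iSup_le fun n => (Function.iterate_succ_apply' l n a).ge.trans
      (le_iSup (fun n => l^[n] a) (n + 1))

theorem range_le_range_iff {J : Type*} [Category J] {F X Y : J ⥤ Type w} {f : F ⟶ Y}
    {g : X ⟶ Y} [Mono g] :
    Subfunctor.range f ≤ Subfunctor.range g ↔ ∃ k, k ≫ g = f := by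
  refine ⟨fun h => ⟨Subfunctor.lift f h ≫ inv (Subfunctor.toRange g), ?_⟩,
    fun ⟨_, h⟩ => h ▸ Subfunctor.range_comp_le _ _⟩
  rw [assoc, IsIso.inv_comp_eq _ |>.2 (Subfunctor.toRange_ι g).symm, Subfunctor.lift_ι]

theorem range_comp_of_epi {J : Type*} [Category J] {F X Y : J ⥤ Type w} (f : F ⟶ X)
    (g : X ⟶ Y) [Epi f] : Subfunctor.range (f ≫ g) = Subfunctor.range g := by
  rw [Subfunctor.range_comp, Subfunctor.range_eq_top, Subfunctor.image_top]

theorem iSup_ofSection {J : Type u} [Category J] {X : Jᵒᵖ ⥤ Type w} (N : Subfunctor X) :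
    ⨆ x : N.toFunctor.Elements, Subfunctor.ofSection x.2.1 = N :=
  le_antisymm (iSup_le fun x => (Subfunctor.ofSection_le_iff _ _).2 x.2.2) fun c y hy =>
    le_iSup (fun x : N.toFunctor.Elements => Subfunctor.ofSection x.2.1) ⟨c, y, hy⟩ c
      (Subfunctor.mem_ofSection_obj y)

end Closure

section Images

variable {C : Type u} [SmallCategory C] {κ : Cardinal.{u}} {F F' : Psh C ⥤ Psh C}

/-- The image in `F.obj X` of a subpresheaf of `X`. -/
noncomputable def mapSubfunctor (F : Psh C ⥤ Psh C) {X : Psh C} (N : Subfunctor X) :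
    Subfunctor (F.obj X) :=
  Subfunctor.range (F.map N.ι)

theorem gc_mapSubfunctor (adj : F ⊣ F') (X : Psh C) :
    GaloisConnection (mapSubfunctor F (X := X))
      fun Q => (mapSubfunctor F' Q).preimage (adj.unit.app X) := by
  intro N Q
  have := adj.rightAdjoint_preservesLimits
  calc mapSubfunctor F N ≤ Q ↔ ∃ k, k ≫ Q.ι = F.map N.ι := by
        rw [← range_le_range_iff, Subfunctor.range_ι]
        rfl
    _ ↔ ∃ k, k ≫ F'.map Q.ι = N.ι ≫ adj.unit.app X := by
        rw [← (adj.homEquiv _ _).exists_congr_right]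
        refine exists_congr fun k => ?_
        rw [← adj.homEquiv_naturality_right, ← adj.unit_naturality, ← adj.homEquiv_unit,
          EmbeddingLike.apply_eq_iff_eq]
    _ ↔ _ := by
        rw [← range_le_range_iff, Subfunctor.range_comp, Subfunctor.image_le_iff,
          Subfunctor.range_ι]
        rfl

theorem mapSubfunctor_range [F.IsLeftAdjoint] {X Y : Psh C} (f : X ⟶ Y) :
    mapSubfunctor F (Subfunctor.range f) = Subfunctor.range (F.map f) := by
  have : Epi (F.map (Subfunctor.toRange f)) := inferInstance
  rw [mapSubfunctor, ← range_comp_of_epi (F.map (Subfunctor.toRange f)), ← F.map_comp,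
    Subfunctor.toRange_ι]

theorem hasCardinalLT_elements_mapSubfunctor [Fact κ.IsRegular] [F.IsLeftAdjoint]
    (hF : ∀ c : C, HasCardinalLT (F.obj (yoneda.obj c)).Elements κ) {X : Psh C}
    {N : Subfunctor X} (hN : HasCardinalLT N.toFunctor.Elements κ) :
    HasCardinalLT (mapSubfunctor F N).toFunctor.Elements κ := by
  rw [← iSup_ofSection N, (gc_mapSubfunctor (.ofIsLeftAdjoint F) X).l_iSup]
  refine hasCardinalLT_elements_iSup hN fun x => ?_
  rw [Subfunctor.ofSection_eq_range, mapSubfunctor_range]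
  exact hasCardinalLT_elements_range _ (hF _)

theorem hasCardinalLT_elements_sup [hκ : Fact κ.IsRegular] {X : Psh C} {M N : Subfunctor X}
    (hM : HasCardinalLT M.toFunctor.Elements κ) (hN : HasCardinalLT N.toFunctor.Elements κ) :
    HasCardinalLT (M ⊔ N).toFunctor.Elements κ := by
  rw [sup_eq_iSup]
  exact hasCardinalLT_elements_iSup (hasCardinalLT_of_finite _ _ hκ.out.aleph0_le)
    (Bool.rec hN hM)

theorem PreTerm.hasCardinalLT_elements_supp [Fact κ.IsRegular] {S : Cells C}
    (hκ : ∀ c : C, HasCardinalLT (yoneda.obj c).Elements κ)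
    (hS : ∀ j, HasCardinalLT (S.A j).toFunctor.Elements κ) {X Y : Psh C} {c : Cᵒᵖ}
    (t : PreTerm S Y X c) : HasCardinalLT t.supp.toFunctor.Elements κ := by
  induction t with
  | inj x => exact hasCardinalLT_elements_ofSection hκ x
  | fill j _ u _ _ ih => exact hasCardinalLT_elements_iSup (hS j) fun a => ih a.1 a.2

namespace Rep

variable {S : Cells C} {X : Psh C}

/-- The smallest subpresheaf `N` of `X` such that `Q` is contained in the replacement of `N`. -/
noncomputable def supp (Q : Subfunctor ((Rep S).obj X)) : Subfunctor X :=
  ⨆ t : Q.toFunctor.Elements, t.2.1.1.supp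

theorem gc_supp : GaloisConnection (supp (S := S) (X := X)) (mapSubfunctor (Rep S)) := by
  intro Q N
  rw [supp, iSup_le_iff]
  exact ⟨fun h c t ht => (mem_range_map_ι_iff N t).2 (h ⟨c, t, ht⟩),
    fun h t => (mem_range_map_ι_iff N t.2.1).1 (h t.1 t.2.2)⟩

end Rep

end Images

section SolutionSet

variable {C : Type u} [SmallCategory C] {κ : Cardinal.{u}}

namespace ElementaryHomotopyData

variable {E : ElementaryHomotopyData C} {U : MorphismProperty (Psh C)} {S : Cells C}

/-- Up to replacement, `h` is a homotopy from the identity of `L` to a retraction onto `K`. -/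
structure IsDeformation (E : ElementaryHomotopyData C) {L : Psh C} (K : Subfunctor L)
    (h : E.cyl.obj L ⟶ (Rep S).obj L) : Prop where
  d0_eq : E.d0.app L ≫ h = (Rep.η S).app L
  range_d1_le : Subfunctor.range (E.d1.app L ≫ h) ≤ mapSubfunctor (Rep S) K
  ι_d1_eq : K.ι ≫ E.d1.app L ≫ h = K.ι ≫ (Rep.η S).app L

theorem exists_isDeformation (hS : S.inclusions.rlp = E.naiveFibrations U) {L : Psh C}
    {K : Subfunctor L} (hK : E.weakEquivalences U K.ι) :
    ∃ h : E.cyl.obj L ⟶ (Rep S).obj L, E.IsDeformation K h := by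
  obtain ⟨r, hr, h, h0, h1⟩ := (weakEquivalences_iff_exists_homotopy hS).1 hK
  replace h1 : E.d1.app L ≫ h = r ≫ (Rep S).map K.ι := h1
  refine ⟨h, h0, ?_, ?_⟩
  · rw [h1]
    exact Subfunctor.range_comp_le _ _
  · rw [h1, reassoc_of% hr]
    exact ((Rep.η S).naturality K.ι).symm

/-- The smallest subpresheaf `P` of `L` such that `h` maps the cylinder of `N` into the
replacement of `P`. -/
noncomputable def reach {L : Psh C} (h : E.cyl.obj L ⟶ (Rep S).obj L) (N : Subfunctor L) :
    Subfunctor L :=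
  Rep.supp ((mapSubfunctor E.cyl N).image h)

theorem reach_le_iff {L : Psh C} {h : E.cyl.obj L ⟶ (Rep S).obj L} {N P : Subfunctor L} :
    reach h N ≤ P ↔ ∃ k, k ≫ (Rep S).map P.ι = E.cyl.map N.ι ≫ h := by
  rw [reach, Rep.gc_supp.le_iff_le, mapSubfunctor, ← Subfunctor.range_comp]
  exact range_le_range_iff

theorem reach_iSup {L : Psh C} (h : E.cyl.obj L ⟶ (Rep S).obj L) {ι : Type*}
    (N : ι → Subfunctor L) : reach h (⨆ i, N i) = ⨆ i, reach h (N i) := by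
  simp only [reach, (gc_mapSubfunctor (.ofIsLeftAdjoint E.cyl) L).l_iSup, Subfunctor.image_iSup,
    Rep.gc_supp.l_iSup]

theorem IsDeformation.weakEquivalences_of_reach_le (hS : S.inclusions.rlp = E.naiveFibrations U)
    {L : Psh C} {K : Subfunctor L} {h : E.cyl.obj L ⟶ (Rep S).obj L} (hK : E.IsDeformation K h)
    {N : Subfunctor L} (hN : reach h N ≤ N) :
    E.weakEquivalences U (Subfunctor.homOfLe (inf_le_right : K ⊓ N ≤ N)) := by
  have η_map {M M' : Psh C} (f : M ⟶ M') :
      (Rep.η S).app M ≫ (Rep S).map f = f ≫ (Rep.η S).app M' := ((Rep.η S).naturality f).symm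
  obtain ⟨k, hk⟩ := reach_le_iff.1 hN
  have hd1 : (E.d1.app _ ≫ k) ≫ (Rep S).map N.ι = N.ι ≫ E.d1.app L ≫ h := by
    rw [assoc, hk, d1_cyl_map_assoc]
  obtain ⟨r, hr⟩ : ∃ r, r ≫ (Rep S).map (K ⊓ N).ι = (E.d1.app _ ≫ k) ≫ (Rep S).map N.ι := by
    refine range_le_range_iff.1 (?_ : _ ≤ mapSubfunctor (Rep S) (K ⊓ N))
    rw [Rep.gc_supp.u_inf]
    refine le_inf ?_ (Subfunctor.range_comp_le _ _)
    rw [hd1]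
    exact (Subfunctor.range_comp_le _ _).trans hK.range_d1_le
  refine (weakEquivalences_iff_exists_homotopy hS).2 ⟨r, ?_, k, ?_, ?_⟩
  · rw [← cancel_mono ((Rep S).map (K ⊓ N).ι), assoc, hr, hd1, η_map]
    exact Subfunctor.homOfLe inf_le_left ≫= hK.ι_d1_eq
  · rw [← cancel_mono ((Rep S).map N.ι), assoc, hk, d0_cyl_map_assoc, hK.d0_eq, η_map]
  · rw [← cancel_mono ((Rep S).map N.ι)]
    refine hr.symm.trans ?_
    rw [assoc, ← (Rep S).map_comp, Subfunctor.homOfLe_ι]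

theorem reach_iSup_le {L : Psh C} {h : E.cyl.obj L ⟶ (Rep S).obj L} {ι : Type*}
    {N : ι → Subfunctor L} (hN : ∀ i, reach h (N i) ≤ N i) : reach h (⨆ i, N i) ≤ ⨆ i, N i :=
  (reach_iSup h N).trans_le (iSup_mono hN)

/-- The cardinal `κ` is regular and exceeds the sizes of `ℕ`, of the representables and their
cylinders, and of the boundaries of the cells in `S`. -/
structure IsBound (E : ElementaryHomotopyData C) (S : Cells C) (κ : Cardinal.{u}) : Prop where
  isRegular : κ.IsRegular
  hasCardinalLT_nat : HasCardinalLT ℕ κ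
  hasCardinalLT_yoneda (c : C) : HasCardinalLT (yoneda.obj c).Elements κ
  hasCardinalLT_cyl_yoneda (c : C) : HasCardinalLT (E.cyl.obj (yoneda.obj c)).Elements κ
  hasCardinalLT_cells (j : S.J) : HasCardinalLT (S.A j).toFunctor.Elements κ

variable (E S) in
theorem exists_isBound : ∃ κ : Cardinal.{u}, E.IsBound S κ := by
  obtain ⟨κ, hκ, h⟩ := HasCardinalLT.exists_regular_cardinal_forall.{u}
    fun i : Unit ⊕ C ⊕ C ⊕ S.J => match i with
    | .inl _ => ULift.{u} ℕ
    | .inr (.inl c) => (yoneda.obj c).Elements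
    | .inr (.inr (.inl c)) => (E.cyl.obj (yoneda.obj c)).Elements
    | .inr (.inr (.inr j)) => (S.A j).toFunctor.Elements
  exact ⟨κ, hκ, (h (.inl ())).of_surjective _ ULift.down_surjective, fun c => h (.inr (.inl c)),
    fun c => h (.inr (.inr (.inl c))), fun j => h (.inr (.inr (.inr j)))⟩

namespace IsBound

theorem hasCardinalLT_elements_reach (hκ : E.IsBound S κ) {L : Psh C}
    (h : E.cyl.obj L ⟶ (Rep S).obj L) {N : Subfunctor L}
    (hN : HasCardinalLT N.toFunctor.Elements κ) :
    HasCardinalLT (reach h N).toFunctor.Elements κ := by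
  have : Fact κ.IsRegular := ⟨hκ.isRegular⟩
  have himage : HasCardinalLT ((mapSubfunctor E.cyl N).image h).toFunctor.Elements κ := by
    rw [← Subfunctor.range_ι (mapSubfunctor E.cyl N), ← Subfunctor.range_comp]
    exact hasCardinalLT_elements_range _
      (hasCardinalLT_elements_mapSubfunctor hκ.hasCardinalLT_cyl_yoneda hN)
  exact hasCardinalLT_elements_iSup himage fun t =>
    t.2.1.1.hasCardinalLT_elements_supp hκ.hasCardinalLT_yoneda hκ.hasCardinalLT_cells

theorem exists_reach_le (hκ : E.IsBound S κ) {L : Psh C} (h h' : E.cyl.obj L ⟶ (Rep S).obj L)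
    {N : Subfunctor L} (hN : HasCardinalLT N.toFunctor.Elements κ) :
    ∃ N', N ≤ N' ∧ HasCardinalLT N'.toFunctor.Elements κ ∧ reach h N' ≤ N' ∧ reach h' N' ≤ N' := by
  have : Fact κ.IsRegular := ⟨hκ.isRegular⟩
  obtain ⟨N', hN', hcard, hle⟩ := exists_le_and_map_le (l := fun N => reach h N ⊔ reach h' N)
    (P := fun N => HasCardinalLT N.toFunctor.Elements κ)
    (fun f => by simp only [reach_iSup, iSup_sup_eq])
    (fun f => hasCardinalLT_elements_iSup hκ.hasCardinalLT_nat)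
    (fun N hN => hasCardinalLT_elements_sup (hκ.hasCardinalLT_elements_reach h hN)
      (hκ.hasCardinalLT_elements_reach h' hN)) hN
  exact ⟨N', hN', hcard, le_sup_left.trans hle, le_sup_right.trans hle⟩

end IsBound

instance : (E.weakEquivalences U).RespectsIso :=
  MorphismProperty.respectsIso_of_isStableUnderComposition fun _ _ _ _ =>
    weakEquivalences_of_llp fun _ _ _ _ => inferInstance

theorem hasFactorization_anodyne (hΛ : IsGeneratedByCells (E.Lambda U)) :
    (E.Anodyne U).HasFactorization (E.naiveFibrations U) :=
  hΛ.hasFactorization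

theorem weakEquivalences_homOfLe_sup [(E.Anodyne U).HasFactorization (E.naiveFibrations U)]
    {L : Psh C} {K M : Subfunctor L}
    (h : E.weakEquivalences U (Subfunctor.homOfLe (inf_le_right : K ⊓ M ≤ M))) :
    E.weakEquivalences U (Subfunctor.homOfLe (le_sup_left : K ≤ K ⊔ M)) :=
  weakEquivalences_of_llp fun _ _ p hp =>
    have := llp_naiveFibrationsToFibrant_of_weakEquivalences h p hp
    hasLiftingProperty_homOfLe_sup

theorem weakEquivalences_sup_ι (hS : S.inclusions.rlp = E.naiveFibrations U) {L : Psh C}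
    {K M : Subfunctor L} (hK : E.weakEquivalences U K.ι) {h : E.cyl.obj L ⟶ (Rep S).obj L}
    (hh : E.IsDeformation K h) (hM : reach h M ≤ M) : E.weakEquivalences U (K ⊔ M).ι :=
  have := hasFactorization_anodyne ⟨S, hS⟩
  (E.weakEquivalences U).of_precomp (Subfunctor.homOfLe le_sup_left) _
    (weakEquivalences_homOfLe_sup (hh.weakEquivalences_of_reach_le hS hM)) hK

theorem IsBound.exists_lt_hasLiftingProperty (hκ : E.IsBound S κ)
    (hS : S.inclusions.rlp = E.naiveFibrations U) {X Y : Psh C} {p : X ⟶ Y}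
    (hp : (smallCells κ (.monomorphisms _ ⊓ E.weakEquivalences U)).inclusions.rlp p) {L : Psh C}
    {K M : Subfunctor L} (hK : E.weakEquivalences U K.ι) {h : E.cyl.obj L ⟶ (Rep S).obj L}
    (hh : E.IsDeformation K h) (hM : reach h M ≤ M) (hne : K ⊔ M ≠ ⊤) :
    ∃ N, reach h N ≤ N ∧ ∃ hlt : K ⊔ M < K ⊔ M ⊔ N,
      HasLiftingProperty (Subfunctor.homOfLe hlt.le) p := by
  obtain ⟨c, x, hx⟩ : ∃ c, ∃ x : L.obj c, x ∉ (K ⊔ M).obj c := by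
    by_contra! h
    exact hne (top_le_iff.1 fun c x _ => h c x)
  obtain ⟨h', hh'⟩ := exists_isDeformation hS (weakEquivalences_sup_ι hS hK hh hM)
  -- Stability of `N` under `h'` makes `(K ⊔ M) ⊓ N ⟶ N` a weak equivalence, and stability under
  -- `h` allows the construction to be repeated with `M ⊔ N` in place of `M`.
  obtain ⟨N, hxN, hcard, hN, hN'⟩ := hκ.exists_reach_le h h'
    (hasCardinalLT_elements_ofSection hκ.hasCardinalLT_yoneda x)
  have := hasLiftingProperty_of_smallCells hp hcard
    (i := Subfunctor.homOfLe (inf_le_right : (K ⊔ M) ⊓ N ≤ N))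
    ⟨.infer_property _, hh'.weakEquivalences_of_reach_le hS hN'⟩
  have hlt : K ⊔ M < K ⊔ M ⊔ N :=
    left_lt_sup.2 fun h => hx ((Subfunctor.ofSection_le_iff _ _).1 (hxN.trans h))
  exact ⟨N, hN, hlt, hasLiftingProperty_homOfLe_sup⟩

theorem IsBound.rlp_of_smallCells (hκ : E.IsBound S κ)
    (hS : S.inclusions.rlp = E.naiveFibrations U) {X Y : Psh C} {p : X ⟶ Y}
    (hp : (smallCells κ (.monomorphisms _ ⊓ E.weakEquivalences U)).inclusions.rlp p) :
    (MorphismProperty.monomorphisms (Psh C) ⊓ E.weakEquivalences U).rlp p := by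
  rintro K L i ⟨hi : Mono i, hw⟩
  rw [← hasLiftingProperty_range_ι_iff]
  have hK : E.weakEquivalences U (Subfunctor.range i).ι :=
    ((E.weakEquivalences U).cancel_left_of_respectsIso (Subfunctor.toRange i) _).1 hw
  obtain ⟨h, hh⟩ := exists_isDeformation hS hK
  refine hasLiftingProperty_ι_of_exists_extension
    (𝒢 := (Subfunctor.range i ⊔ ·) '' {M | reach h M ≤ M}) (fun 𝒮 h𝒮 hne => ?_) ?_
    ⟨⊥, ?_, sup_bot_eq _⟩
  · obtain ⟨𝒯, h𝒯, rfl⟩ := Set.subset_image_iff.1 h𝒮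
    have : Nonempty 𝒯 := (Set.image_nonempty.1 hne).to_subtype
    exact ⟨⨆ M : 𝒯, M.1, reach_iSup_le fun M => h𝒯 M.2, sup_iSup.trans sSup_image'.symm⟩
  · rintro _ ⟨M, hM, rfl⟩ hne
    obtain ⟨N, hN, hlt, hlift⟩ := hκ.exists_lt_hasLiftingProperty hS hp hK hh hM hne
    refine ⟨_, ⟨M ⊔ N, ?_, (sup_assoc _ _ _).symm⟩, hlt, hlift⟩
    rw [Set.mem_ofPred_eq, sup_eq_iSup]
    exact reach_iSup_le (Bool.rec hN hM)
  · rw [Set.mem_ofPred_eq, ← iSup_of_empty Empty.elim]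
    exact reach_iSup_le fun i => i.elim

end ElementaryHomotopyData

end SolutionSet

/-! ### The model structure -/

section ModelStructure

variable {C : Type u} [SmallCategory C]

namespace ElementaryHomotopyData

variable {E : ElementaryHomotopyData C} {U : MorphismProperty (Psh C)}

theorem isGeneratedByCells_monomorphisms_inf_weakEquivalences (hU : IsGeneratedByCells U) :
    IsGeneratedByCells (.monomorphisms (Psh C) ⊓ E.weakEquivalences U) := by
  obtain ⟨S, hS⟩ := E.isGeneratedByCells_lambda hU
  obtain ⟨κ, hκ⟩ := exists_isBound E S
  exact ⟨_, le_antisymm (fun _ _ _ => hκ.rlp_of_smallCells hS)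
    (MorphismProperty.antitone_rlp (smallCells_inclusions_le _))⟩

theorem monomorphisms_inf_weakEquivalences_rlp_llp_le
    [(E.Anodyne U).HasFactorization (E.naiveFibrations U)] :
    (MorphismProperty.monomorphisms (Psh C) ⊓ E.weakEquivalences U).rlp.llp ≤
      .monomorphisms (Psh C) ⊓ E.weakEquivalences U := by
  refine le_inf ?_ fun K L i hi => weakEquivalences_of_llp fun X Y p hp => hi p ?_
  · exact (MorphismProperty.antitone_llp (MorphismProperty.antitone_rlp inf_le_left)).trans
      (monomorphisms_rlp_llp C).le
  · rintro _ _ j ⟨hj : Mono j, hw⟩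
    exact llp_naiveFibrationsToFibrant_of_weakEquivalences hw p hp

theorem monomorphisms_inf_weakEquivalences_rlp_inf :
    (MorphismProperty.monomorphisms (Psh C) ⊓ E.weakEquivalences U).rlp ⊓ E.weakEquivalences U =
      (MorphismProperty.monomorphisms (Psh C)).rlp := by
  refine le_antisymm (fun X Y p hp => ?_) (le_inf (MorphismProperty.antitone_rlp inf_le_left)
    fun _ _ _ => weakEquivalences_of_monomorphisms_rlp)
  have := (IsGeneratedByCells.monomorphisms C).hasFactorization
  let φ := MorphismProperty.factorizationData
    (MorphismProperty.monomorphisms (Psh C)).rlp.llp (MorphismProperty.monomorphisms (Psh C)).rlp p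
  have hi : MorphismProperty.monomorphisms (Psh C) φ.i := (monomorphisms_rlp_llp C).le _ φ.hi
  have hq : E.weakEquivalences U φ.p := weakEquivalences_of_monomorphisms_rlp φ.hp
  have hw : E.weakEquivalences U φ.i :=
    (E.weakEquivalences U).of_postcomp _ _ hq (by rw [φ.fac]; exact hp.2)
  have := hp.1 φ.i ⟨hi, hw⟩
  exact MorphismProperty.of_retract (RetractArrow.ofRightLiftingProperty φ.fac) φ.hp

theorem isModelStructure_weakEquivalences (hU : IsGeneratedByCells U) :
    IsModelStructure (E.weakEquivalences U) (.monomorphisms (Psh C))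
      (MorphismProperty.monomorphisms (Psh C) ⊓ E.weakEquivalences U).rlp where
  weq_comp _ _ _ f g := (E.weakEquivalences U).comp_mem f g
  weq_of_postcomp _ _ _ f g := (E.weakEquivalences U).of_postcomp f g
  weq_of_precomp _ _ _ f g := (E.weakEquivalences U).of_precomp f g
  wfs_trivCof_fib :=
    have := hasFactorization_anodyne (E.isGeneratedByCells_lambda hU)
    (isGeneratedByCells_monomorphisms_inf_weakEquivalences hU).isWFS
      monomorphisms_inf_weakEquivalences_rlp_llp_le
  wfs_cof_trivFib := by
    rw [monomorphisms_inf_weakEquivalences_rlp_inf]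
    exact (IsGeneratedByCells.monomorphisms C).isWFS (monomorphisms_rlp_llp C).le

theorem NaivelyFibrant.rlp_terminal_from {A : Psh C} (hA : E.NaivelyFibrant U A) :
    (MorphismProperty.monomorphisms (Psh C) ⊓ E.weakEquivalences U).rlp (terminal.from A) := by
  rintro K L i ⟨hi : Mono i, hw⟩
  exact hasLiftingProperty_terminal_iff.2 (hw.exists_extension hA)

theorem NaivelyFibrant.bijective_precomp_of_retract {A B : Psh C} (hA : E.NaivelyFibrant U A)
    (hB : E.NaivelyFibrant U B) (r : Retract A B) {X Y : Psh C} {f : X ⟶ Y}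
    (hf : Function.Bijective (E.precomp (A := B) f)) :
    Function.Bijective (E.precomp (A := A) f) := by
  have comp_i_r {Z : Psh C} (v : Z ⟶ A) : (v ≫ r.i) ≫ r.r = v := by
    rw [assoc, r.retract, comp_id]
  rw [hB.bijective_precomp_iff] at hf
  refine hA.bijective_precomp_iff.2 ⟨fun u => ?_, fun v w hvw => ?_⟩
  · obtain ⟨v, hv⟩ := hf.1 (u ≫ r.i)
    exact ⟨v ≫ r.r, by simpa only [assoc, comp_i_r] using hv.comp_right r.r⟩
  · have := hf.2 (v ≫ r.i) (w ≫ r.i) (by simpa only [assoc] using hvw.comp_right r.i)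
    simpa only [comp_i_r] using this.comp_right r.r

end ElementaryHomotopyData

end ModelStructure

section Monad

variable {C : Type u} [SmallCategory C] {T : Monad (Psh C)} {ι : Type u} {G : ι → Psh C}

theorem isGeneratedByCells_unitsOf [∀ i, Mono (T.η.app (G i))] :
    IsGeneratedByCells (unitsOf T G) := by
  have : unitsOf T G = MorphismProperty.ofHoms fun i => T.η.app (G i) := by
    ext X Y f
    constructor <;> rintro ⟨i⟩ <;> exact ⟨i⟩
  rw [this]
  exact IsGeneratedByCells.ofHoms _

namespace ElementaryHomotopyData

variable {E : ElementaryHomotopyData C}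

theorem anodyne_of_saturatedClassGen {U : MorphismProperty (Psh C)} {X Y : Psh C} {f : X ⟶ Y}
    (hf : SaturatedClassGen.{u} U f) : E.Anodyne U f :=
  MorphismProperty.antitone_llp
    (MorphismProperty.antitone_rlp fun _ _ i hi => ⟨0, .ofS i hi⟩) _
    (saturatedClassGen_le_llp_rlp U f hf)

theorem tWeakEquiv_eq_weakEquivalences
    (hη : ∀ X, E.Anodyne (unitsOf T G) (T.η.app X))
    (hT : ∀ A : T.Algebra, E.NaivelyFibrant (unitsOf T G) A.A) :
    E.TWeakEquiv T = E.weakEquivalences (unitsOf T G) := by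
  refine le_antisymm (fun X Y f hf A hA => ?_) fun X Y f hf A => hf A.A (hT A)
  obtain ⟨r, hr⟩ := hA.exists_extension (hη A) (𝟙 A)
  exact hA.bijective_precomp_of_retract (hT (T.free.obj A)) ⟨T.η.app A, r, hr⟩ (hf _)

end ElementaryHomotopyData

end Monad

theorem modelStructure_of_monad_general {C : Type u} [SmallCategory C]
    (E : ElementaryHomotopyData C) (T : Monad (Psh C))
    (hM1b : ∀ X : Psh C, Mono (T.η.app X)) {ι : Type u} (G : ι → Psh C)
    (hM2 : ∀ X : Psh C, SaturatedClassGen.{u} (unitsOf T G) (T.η.app X))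
    (hM3 : ∀ A : T.Algebra, E.NaivelyFibrant (unitsOf T G) A.A) :
    IsModelStructure (E.TWeakEquiv T) (MorphismProperty.monomorphisms (Psh C))
      (RLP (MorphismProperty.monomorphisms (Psh C) ⊓ E.TWeakEquiv T)) ∧
    (∀ A : T.Algebra,
      RLP (MorphismProperty.monomorphisms (Psh C) ⊓ E.TWeakEquiv T)
        (terminal.from A.A)) ∧
    (∀ X : Psh C,
      MorphismProperty.monomorphisms (Psh C) (T.η.app X) ∧
      E.TWeakEquiv T (T.η.app X) ∧
      RLP (MorphismProperty.monomorphisms (Psh C) ⊓ E.TWeakEquiv T)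
        (terminal.from (T.toFunctor.obj X))) := by
  have anodyne_η (X : Psh C) : E.Anodyne (unitsOf T G) (T.η.app X) :=
    ElementaryHomotopyData.anodyne_of_saturatedClassGen (hM2 X)
  rw [ElementaryHomotopyData.tWeakEquiv_eq_weakEquivalences anodyne_η hM3]
  exact ⟨ElementaryHomotopyData.isModelStructure_weakEquivalences isGeneratedByCells_unitsOf,
    fun A => (hM3 A).rlp_terminal_from,
    fun X => ⟨hM1b X, ElementaryHomotopyData.weakEquivalences_of_anodyne (anodyne_η X),
      (hM3 (T.free.obj X)).rlp_terminal_from⟩⟩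

/-- Theorem (main): given a monad `T` on presheaves satisfying (M1)-(M3) relative to
elementary homotopy data, there is a model structure whose cofibrations are the
monomorphisms, whose weak equivalences are the `T`-weak equivalences and whose fibrations
are the maps with the RLP with respect to maps which are both monomorphisms and `T`-weak
equivalences; in it every `T`-algebra is fibrant and each unit `η_X : X ⟶ TX` is an acyclic
cofibration into a fibrant object, exhibiting `TX` as a fibrant replacement of `X`. -/
theorem modelStructure_of_monad {C : Type u} [SmallCategory C]
    (E : ElementaryHomotopyData C) (T : Monad (Psh C))
    (hM1a : ∀ ⦃K L : Psh C⦄ (j : K ⟶ L), CategoryTheory.Mono j →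
      CategoryTheory.Mono (T.toFunctor.map j))
    (hM1b : ∀ X : Psh C, CategoryTheory.Mono (T.η.app X))
    {ι : Type u} (G : ι → Psh C)
    (hM2 : ∀ X : Psh C, SaturatedClassGen.{u} (unitsOf T G) (T.η.app X))
    (hM3 : ∀ A : T.Algebra, E.NaivelyFibrant (unitsOf T G) A.A)
    :
    IsModelStructure (E.TWeakEquiv T) (MorphismProperty.monomorphisms (Psh C))
      (RLP (MorphismProperty.monomorphisms (Psh C) ⊓ E.TWeakEquiv T)) ∧
    (∀ A : T.Algebra,
      RLP (MorphismProperty.monomorphisms (Psh C) ⊓ E.TWeakEquiv T)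
        (terminal.from A.A)) ∧
    (∀ X : Psh C,
      MorphismProperty.monomorphisms (Psh C) (T.η.app X) ∧
      E.TWeakEquiv T (T.η.app X) ∧
      RLP (MorphismProperty.monomorphisms (Psh C) ⊓ E.TWeakEquiv T)
        (terminal.from (T.toFunctor.obj X))) :=
  modelStructure_of_monad_general E T hM1b G hM2 hM3

end PaperMSMonad
end

section
/- Let 𝒞 be a small category, (−⊗I) elementary homotopy data on Psh(𝒞), and T a monad on Psh(𝒞) satisfying (M1)–(M3). Let (A, α : TA → A) be a T-algebra and f, g : X → A maps with f ≃ g (there is a homotopy from f to g). Then the induced T-algebra homomorphisms f' = α ∘ Tf and g' = α ∘ Tg : TX → A satisfy f' ≃ g'. -/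
open CategoryTheory Category Limits

universe w v u

namespace PaperMSMonad

open CategoryTheory Category Limits

/-!
Transposing along `(− ⊗ I) ⊣ (−)^I`, a homotopy `K ⊗ I ⟶ A` can be extended along `j : K ⟶ L`
with prescribed ends exactly when `j` lifts against the endpoint map `A^I ⟶ A ⨯ A` of the path
object. For naively fibrant `A` this holds for all `j ∈ Λ_I(S)`, since `Λ_I(S)` is closed under
`j ↦ (K⊗I ∪ L⊗∂I ⟶ L⊗I)`, and hence for every anodyne `j`, these being determined by a lifting
property. Each unit `η_X` is anodyne by (M2), so a homotopy from `f = α ∘ Tf ∘ η_X` to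
`g = α ∘ Tg ∘ η_X` extends along `η_X` to one from `α ∘ Tf` to `α ∘ Tg`.
-/

theorem isWeaklySaturated_llp_s4 {D : Type*} [Category D] (W : MorphismProperty D) :
    IsWeaklySaturated.{w} (LLP W) := by
  change IsWeaklySaturated.{w} W.llp
  refine ⟨fun _ _ f _ ↦ W.llp_of_isIso f,
    fun _ _ _ _ _ _ _ _ sq hf ↦ MorphismProperty.of_isPushout sq hf,
    fun X Y Z W' f g hfg hg ↦ ?_, fun J _ _ _ _ F hsucc hlim c hc A B q hq ↦ ?_⟩
  · obtain ⟨i, r, i', r', left_retract, right_retract, i_w, r_w⟩ := hfg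
    let retract : RetractArrow f g :=
      { i := Arrow.homMk i i' i_w
        r := Arrow.homMk r r' r_w.symm
        retract := Arrow.hom_ext _ _ left_retract right_retract }
    exact MorphismProperty.of_retract retract hg
  · have : F.IsWellOrderContinuous := ⟨hlim⟩
    exact HasLiftingProperty.transfiniteComposition.hasLiftingProperty_ι_app_bot hc.some
      fun j hj ↦ hsucc j hj q hq

section PathObject

variable {D : Type*} [Category D] {F R : D ⥤ D} (adj : F ⊣ R)

/-- Evaluation `A^I ⟶ A` of paths at an endpoint `d`, where the path object `A^I = R.obj A` is
given by a right adjoint of the cylinder functor `F`. -/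
def pathEval (d : 𝟭 D ⟶ F) (A : D) : R.obj A ⟶ A :=
  d.app (R.obj A) ≫ adj.counit.app A

theorem homEquiv_comp_pathEval (d : 𝟭 D ⟶ F) {K A : D} (θ : F.obj K ⟶ A) :
    adj.homEquiv K A θ ≫ pathEval adj d A = d.app K ≫ θ := by
  obtain ⟨γ, rfl⟩ := (adj.homEquiv K A).symm.surjective θ
  rw [Equiv.apply_symm_apply, adj.homEquiv_counit]
  exact d.naturality_assoc γ (adj.counit.app A)

variable [HasBinaryProducts D] (d₀ d₁ : 𝟭 D ⟶ F)

/-- The endpoint map `A^I ⟶ A ⨯ A` of the path object. -/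
noncomputable def pathEndpoints (A : D) : R.obj A ⟶ A ⨯ A :=
  prod.lift (pathEval adj d₀ A) (pathEval adj d₁ A)

theorem homEquiv_comp_pathEndpoints_eq_iff {K A : D} {θ : F.obj K ⟶ A} {b : K ⟶ A ⨯ A} :
    adj.homEquiv K A θ ≫ pathEndpoints adj d₀ d₁ A = b ↔
      d₀.app K ≫ θ = b ≫ prod.fst ∧ d₁.app K ≫ θ = b ≫ prod.snd := by
  rw [pathEndpoints, Limits.prod.hom_ext_iff, assoc, assoc, prod.lift_fst, prod.lift_snd,
    homEquiv_comp_pathEval, homEquiv_comp_pathEval]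

end PathObject

namespace ElementaryHomotopyData

variable {C : Type u} [SmallCategory C] (E : ElementaryHomotopyData C)

/-- The relative homotopy extension property of `j : K ⟶ L` with respect to `A`: a homotopy on `K`
whose ends are restrictions of maps `f` and `g` on `L` extends along `j` to a homotopy from `f`
to `g`. -/
def HasHtpyExtension {K L : Psh C} (j : K ⟶ L) (A : Psh C) : Prop :=
  ∀ ⦃θ : E.cyl.obj K ⟶ A⦄ ⦃f g : L ⟶ A⦄,
    E.d0.app K ≫ θ = j ≫ f → E.d1.app K ≫ θ = j ≫ g →
    ∃ θ' : E.cyl.obj L ⟶ A, E.cyl.map j ≫ θ' = θ ∧ E.d0.app L ≫ θ' = f ∧ E.d1.app L ≫ θ' = g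

theorem hasHtpyExtension_of_hasLiftingProperty_gluingBoth {K L A : Psh C} {j : K ⟶ L}
    (hj : HasLiftingProperty (E.gluingBoth j) (terminal.from A)) : E.HasHtpyExtension j A := by
  intro θ f g hf hg
  have compatible :
      coprod.desc (E.d0.app K) (E.d1.app K) ≫ θ = coprod.map j j ≫ coprod.desc f g := by
    rw [coprod.desc_comp, coprod.map_desc]
    exact congrArg₂ coprod.desc hf hg
  have sq : CommSq (pushout.desc θ (coprod.desc f g) compatible) (E.gluingBoth j)
      (terminal.from A) (terminal.from _) := ⟨Subsingleton.elim _ _⟩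
  have restrict : E.cyl.map j ≫ sq.lift = θ := by
    simpa only [gluingBoth, pushout.inl_desc_assoc, pushout.inl_desc] using
      pushout.inl _ _ ≫= sq.fac_left
  have ends :
      (coprod.desc (E.d0.app L) (E.d1.app L) : L ⨿ L ⟶ _) ≫ sq.lift = coprod.desc f g := by
    simpa only [gluingBoth, pushout.inr_desc_assoc, pushout.inr_desc] using
      pushout.inr _ _ ≫= sq.fac_left
  refine ⟨sq.lift, restrict, ?_, ?_⟩
  · simpa only [coprod.inl_desc_assoc, coprod.inl_desc] using coprod.inl ≫= ends
  · simpa only [coprod.inr_desc_assoc, coprod.inr_desc] using coprod.inr ≫= ends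

theorem hasLiftingProperty_pathEndpoints_iff {R : Psh C ⥤ Psh C} (adj : E.cyl ⊣ R)
    {K L A : Psh C} (j : K ⟶ L) :
    HasLiftingProperty j (pathEndpoints adj E.d0 E.d1 A) ↔ E.HasHtpyExtension j A := by
  refine ⟨fun _ θ f g hf hg ↦ ?_, fun hj ↦ ⟨fun {a b} sq ↦ ?_⟩⟩
  · have sq : CommSq (adj.homEquiv K A θ) j (pathEndpoints adj E.d0 E.d1 A) (prod.lift f g) :=
      ⟨(homEquiv_comp_pathEndpoints_eq_iff ..).2 (by
        rw [assoc, assoc, prod.lift_fst, prod.lift_snd]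
        exact ⟨hf, hg⟩)⟩
    obtain ⟨θ', hθ'⟩ := (adj.homEquiv L A).surjective sq.lift
    have restrict : E.cyl.map j ≫ θ' = θ := (adj.homEquiv K A).injective <| by
      rw [adj.homEquiv_naturality_left, hθ', sq.fac_left]
    have ends := (homEquiv_comp_pathEndpoints_eq_iff ..).1 (hθ' ▸ sq.fac_right)
    rw [prod.lift_fst, prod.lift_snd] at ends
    exact ⟨θ', restrict, ends⟩
  · obtain ⟨θ, rfl⟩ := (adj.homEquiv K A).surjective a
    have ends := (homEquiv_comp_pathEndpoints_eq_iff ..).1 sq.w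
    rw [assoc, assoc] at ends
    obtain ⟨θ', restrict, ends'⟩ := hj ends.1 ends.2
    refine ⟨⟨⟨adj.homEquiv L A θ', ?_, (homEquiv_comp_pathEndpoints_eq_iff ..).2 ends'⟩⟩⟩
    rw [← adj.homEquiv_naturality_left, restrict]

variable {E} {S : MorphismProperty (Psh C)}

theorem Lambda.gluingBoth {K L : Psh C} {j : K ⟶ L} (hj : E.Lambda S j) :
    E.Lambda S (E.gluingBoth j) :=
  let ⟨n, hn⟩ := hj
  ⟨n + 1, .glue j hn⟩

theorem Lambda.anodyne {K L : Psh C} {j : K ⟶ L} (hj : E.Lambda S j) : E.Anodyne S j :=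
  fun _ _ _ hp ↦ hp j hj

theorem saturatedClassGen_le_anodyne : SaturatedClassGen.{w} S ≤ E.Anodyne S :=
  fun _ _ _ hf ↦ hf _ (isWeaklySaturated_llp_s4 _) fun _ _ j hj ↦ Lambda.anodyne ⟨0, .ofS j hj⟩

theorem NaivelyFibrant.hasHtpyExtension {A K L : Psh C} {j : K ⟶ L}
    (hA : E.NaivelyFibrant S A) (hj : E.Anodyne S j) : E.HasHtpyExtension j A := by
  have := E.preservesColimits
  have := Presheaf.isLeftAdjoint_of_preservesColimits.{u} E.cyl
  let adj := Adjunction.ofIsLeftAdjoint E.cyl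
  have endpoints_rlp : RLP (E.Lambda S) (pathEndpoints adj E.d0 E.d1 A) := fun _ _ i hi ↦
    (E.hasLiftingProperty_pathEndpoints_iff adj i).2 <|
      E.hasHtpyExtension_of_hasLiftingProperty_gluingBoth (hA _ hi.gluingBoth.anodyne)
  exact (E.hasLiftingProperty_pathEndpoints_iff adj j).1 (hj _ endpoints_rlp)

theorem NaivelyFibrant.htpy_of_htpy_comp {A K L : Psh C} {j : K ⟶ L} {f g : L ⟶ A}
    (hA : E.NaivelyFibrant S A) (hj : E.Anodyne S j) (h : E.Htpy (j ≫ f) (j ≫ g)) :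
    E.Htpy f g := by
  obtain ⟨θ, h0, h1⟩ := h
  obtain ⟨θ', -, h0', h1'⟩ := hA.hasHtpyExtension hj h0 h1
  exact ⟨θ', h0', h1'⟩

end ElementaryHomotopyData

theorem unit_comp_map_comp_a {D : Type*} [Category D] {T : Monad D} (A : T.Algebra)
    {X : D} (f : X ⟶ A.A) : T.η.app X ≫ T.toFunctor.map f ≫ A.a = f := by
  have naturality := T.η.naturality_assoc f A.a
  rw [A.unit] at naturality
  exact naturality.symm.trans (comp_id f)

theorem induced_algebra_homs_homotopic_general {C : Type u} [SmallCategory C]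
    {E : ElementaryHomotopyData C} {T : Monad (Psh C)} {S : MorphismProperty (Psh C)}
    {A : T.Algebra} {X : Psh C} {f g : X ⟶ A.A} (hη : E.Anodyne S (T.η.app X))
    (hA : E.NaivelyFibrant S A.A) (h : E.Htpy f g) :
    E.Htpy (T.toFunctor.map f ≫ A.a) (T.toFunctor.map g ≫ A.a) :=
  hA.htpy_of_htpy_comp hη <| by
    rwa [unit_comp_map_comp_a, unit_comp_map_comp_a]

/-- Corollary: under (M1)-(M3), if `f ≃ g : X ⟶ A` for a `T`-algebra `(A, α)`, then the
induced `T`-algebra homomorphisms `α ∘ Tf` and `α ∘ Tg : TX ⟶ A` are homotopic. -/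
theorem induced_algebra_homs_homotopic {C : Type u} [SmallCategory C]
    (E : ElementaryHomotopyData C) (T : Monad (Psh C))
    (hM1a : ∀ ⦃K L : Psh C⦄ (j : K ⟶ L), CategoryTheory.Mono j →
      CategoryTheory.Mono (T.toFunctor.map j))
    (hM1b : ∀ X : Psh C, CategoryTheory.Mono (T.η.app X))
    {ι : Type u} (G : ι → Psh C)
    (hM2 : ∀ X : Psh C, SaturatedClassGen.{u} (unitsOf T G) (T.η.app X))
    (hM3 : ∀ A : T.Algebra, E.NaivelyFibrant (unitsOf T G) A.A)
    (A : T.Algebra) {X : Psh C} (f g : X ⟶ A.A) (h : E.Htpy f g) :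
    E.Htpy (T.toFunctor.map f ≫ A.a) (T.toFunctor.map g ≫ A.a) :=
  induced_algebra_homs_homotopic_general
    (ElementaryHomotopyData.saturatedClassGen_le_anodyne _ (hM2 X)) (hM3 A) h

end PaperMSMonad
end
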